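/- Let Θ be a DTAS which self-assembles Q using at most m_b = 1 black tile types and m_g = 2k + 3 gray tile types. Then the set of distinct supertiles occurring in the tile assignment Q_Θ has cardinality at most m = k + 3. -/

import Mathlib

/-!
Why the bound holds.  Directedness makes a tile a function of its south and west inputs.  Since
there is only one black tile, with south glue `σ` and west glue `ω`, black tiles also output `σ`
and `ω`.  The tiles on the top rows above the black interiors hence form chains with constant
south input `σ`, in which each tile determines the next one; likewise, on the right columns, with
constant west input `ω`.

*Gray tiles.*  The gadget row and the gadget column each force `k + 1` gray tiles, with south input
`σ` and west input `ω` respectively: `k` counting ones and one behind the white tile.  The corner of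
a supertile is of neither kind (`Grid.corner_w`), so the budget `2k + 3` is exhausted: all color
counters use the tiles of the gadgets (`Grid.top_row`), and all of these output `σ` to the north,
respectively `ω` to the east.  So a supertile transmits information only through the tile `C₂` in
its upper left and the tile `C₁` in its lower right corner, and a complete supertile is determined
by its lower left tile `A` (`Grid.supertile_eq`).

*White tiles.*  Besides the two white counter tiles there are the tiles `A`, `C₁`, `C₂`, and the
tiles `B₁`, `B₂` directly before `C₁`, `C₂`.  White bottom rows and left columns are longer than
the number of white tiles, so `B₁` and `B₂` lie on cycles; with that, all these classes are
disjoint (`Grid.white_count`).  Moreover `B₁` determines `C₁`, which determines the portrayed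
color, and similarly for `B₂`, `C₂`.  At least `k - w` colors occur above the bottom row and
`k - h` right of the left column.  If the color `OR` has `p` tiles `C₁` and `q` tiles `C₂`, the
eight blocks with colors `Xᵢ, OR, OR, Yᵢ` need eight different pairs of inputs for the `Yᵢ`, so
`p q ≥ 8` and `p + q ≥ 6`.  Thus `|C₁| + |C₂| ≥ 2k - w - h + 4`, and the white budget leaves at most
`k + 4 - w - h` tiles `A` (`Grid.SA_card`).  Adding the `w + h - 1` incomplete supertiles gives
`k + 3`.
-/

/-- A colored Wang tile with a color and four glues (north, east, south, west). -/
structure Tile (C G : Type) where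
  color : C
  north : G
  east : G
  south : G
  west : G
deriving DecidableEq

/-- A rectilinear tile assembly system: a finite set of tile types together with
an L-shaped seed, given by its north glues (bottom arm) and east glues (left arm). -/
structure RTAS (C G : Type) where
  tiles : Finset (Tile C G)
  seedN : ℕ → G
  seedE : ℕ → G

/-- A tile assignment for the `M × N` rectangle spanned by the seed:
every tile belongs to the system, west/south glues match the east/north glues of the
west/south neighbours, and the seed glues on the boundary. -/
def IsAssignment {C G : Type} (T : RTAS C G) (M N : ℕ) (f : ℕ → ℕ → Tile C G) : Prop :=
  (∀ x < M, ∀ y < N, f x y ∈ T.tiles) ∧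
  (∀ y < N, (f 0 y).west = T.seedE y) ∧
  (∀ x < M, (f x 0).south = T.seedN x) ∧
  (∀ x, x + 1 < M → ∀ y < N, (f (x + 1) y).west = (f x y).east) ∧
  (∀ x < M, ∀ y, y + 1 < N → (f x (y + 1)).south = (f x y).north)

/-- `T` self-assembles the `M × N` pattern `P` if some tile assignment realizes `P`. -/
def SelfAssembles {C G : Type} (T : RTAS C G) (M N : ℕ) (P : ℕ → ℕ → C) : Prop :=
  ∃ f, IsAssignment T M N f ∧ ∀ x < M, ∀ y < N, (f x y).color = P x y

/-- A directed RTAS: distinct tile types differ in their south or west glue. -/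
def DirectedTAS {C G : Type} (T : RTAS C G) : Prop :=
  ∀ t₁ ∈ T.tiles, ∀ t₂ ∈ T.tiles, t₁ ≠ t₂ → t₁.south ≠ t₂.south ∨ t₁.west ≠ t₂.west

/-- The set of colors occurring in the `M × N` pattern `P`. -/
def colorsOf {C : Type} [DecidableEq C] (M N : ℕ) (P : ℕ → ℕ → C) : Finset C :=
  (Finset.range M ×ˢ Finset.range N).image fun q => P q.1 q.2

/-- The named colors used in the subpatterns of the pattern `P_F` of the paper.
`uniq n` are the "unique" filler colors. -/
inductive PColor where
  | orC | plus | minus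
  | Z1 | Z2 | Z3 | Z4
  | aC | bW | bD | cW | cD | dC
  | arrW (w : Fin 2)
  | arrD (w : Fin 2)
  | upW (s : Fin 2)
  | upD (s : Fin 2)
  | gate (i : Fin 4)
  | X (i : Fin 8)
  | Y (i : Fin 8)
  | varW (v : ℕ)
  | negW (v : ℕ)
  | varAux (v : ℕ)
  | varMod (v : ℕ)
  | varModd (v : ℕ)
  | uniq (n : ℕ)
deriving DecidableEq

/-- The `16 × 2` subpattern `p`: eight `2 × 2` blocks, block `i` having colors
`Xᵢ` (bottom-left), `OR` (bottom-right, top-left) and `Yᵢ` (top-right). -/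
def pPat : ℕ → ℕ → PColor := fun x y =>
  if y = 0 then
    if x % 2 = 0 then PColor.X ⟨x / 2 % 8, Nat.mod_lt _ (by norm_num)⟩ else PColor.orC
  else
    if x % 2 = 0 then PColor.orC else PColor.Y ⟨x / 2 % 8, Nat.mod_lt _ (by norm_num)⟩

/-- The `4 × 4` subpatterns `q₁, …, q₄` (index `idx = 0, …, 3`), with west input
`w = idx / 2` and south input `s = idx % 2` feeding an `OR`-colored position. -/
def qPat (idx : Fin 4) : ℕ → ℕ → PColor := fun x y =>
  let wv : Fin 2 := ⟨idx.val / 2, by have := idx.isLt; omega⟩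
  let sv : Fin 2 := ⟨idx.val % 2, Nat.mod_lt _ (by norm_num)⟩
  match x, y with
  | 0, 0 => PColor.Z1
  | 1, 0 => PColor.Z2
  | 2, 0 => PColor.upD sv
  | 3, 0 => PColor.bD
  | 0, 1 => PColor.Z3
  | 1, 1 => PColor.aC
  | 2, 1 => PColor.upW sv
  | 3, 1 => PColor.bW
  | 0, 2 => PColor.arrD wv
  | 1, 2 => PColor.arrW wv
  | 2, 2 => PColor.orC
  | 3, 2 => if idx.val = 0 then PColor.minus else PColor.plus
  | 0, 3 => PColor.cD
  | 1, 3 => PColor.cW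
  | 2, 3 => PColor.gate idx
  | _, _ => PColor.dC

/-- The `6 × 3` subpattern `q₅`: bottom row `a ↑₀ ↑₁ ↑₀ ↑₁ b`, middle row
`→₀ OR OR OR OR +`, top row `c A B C D d`. -/
def q5Pat : ℕ → ℕ → PColor := fun x y =>
  match y, x with
  | 0, 0 => PColor.aC
  | 0, 1 => PColor.upW 0
  | 0, 2 => PColor.upW 1
  | 0, 3 => PColor.upW 0
  | 0, 4 => PColor.upW 1
  | 0, _ => PColor.bW
  | 1, 0 => PColor.arrW 0
  | 1, 5 => PColor.plus
  | 1, _ => PColor.orC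
  | 2, 0 => PColor.cW
  | 2, 1 => PColor.gate 0
  | 2, 2 => PColor.gate 1
  | 2, 3 => PColor.gate 2
  | 2, 4 => PColor.gate 3
  | _, _ => PColor.dC

/-- A literal: a variable index together with its sign (`true` = positive). -/
abbrev Lit := ℕ × Bool

/-- A clause with three literals. -/
abbrev Clause3 := Lit × Lit × Lit

/-- A boolean formula in 3-CNF over the variables `0, …, numVars - 1`. -/
structure CNF3 where
  numVars : ℕ
  clauses : List Clause3
  wf : ∀ cl ∈ clauses, cl.1.1 < numVars ∧ cl.2.1.1 < numVars ∧ cl.2.2.1 < numVars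

/-- Value of a literal under a variable assignment. -/
def litVal (f : ℕ → Bool) (l : Lit) : Bool := if l.2 then f l.1 else ! f l.1

/-- A 3-CNF formula is satisfiable if some assignment makes every clause true. -/
def CNF3.Satisfiable (F : CNF3) : Prop :=
  ∃ f : ℕ → Bool, ∀ cl ∈ F.clauses,
    (litVal f cl.1 || litVal f cl.2.1 || litVal f cl.2.2) = true

/-- The `2 × 2` subpattern `r₁(v)`. -/
def r1Pat (v : ℕ) : ℕ → ℕ → PColor := fun x y =>
  match x, y with
  | 0, 0 => PColor.Z4
  | 1, 0 => PColor.varW v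
  | 0, 1 => PColor.varAux v
  | _, _ => PColor.varMod v

/-- The `2 × 2` subpattern `r₂(v)`. -/
def r2Pat (v : ℕ) : ℕ → ℕ → PColor := fun x y =>
  match x, y with
  | 0, 0 => PColor.Z4
  | 1, 0 => PColor.negW v
  | 0, 1 => PColor.varAux v
  | _, _ => PColor.varModd v

/-- The `4 × 2` subpattern `r₃(v)`: bottom row `a v ¬v b`, top row `→₀ OR OR +`. -/
def r3Pat (v : ℕ) : ℕ → ℕ → PColor := fun x y =>
  match y, x with
  | 0, 0 => PColor.aC
  | 0, 1 => PColor.varW v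
  | 0, 2 => PColor.negW v
  | 0, _ => PColor.bW
  | 1, 0 => PColor.arrW 0
  | 1, 3 => PColor.plus
  | _, _ => PColor.orC

/-- The color of a literal. -/
def litColor (l : Lit) : PColor := if l.2 then PColor.varW l.1 else PColor.negW l.1

/-- The `5 × 2` subpattern `s(C)` for a clause `C = (c₁ ∨ c₂ ∨ c₃)`:
bottom row `a c₁ c₂ c₃ b`, top row `→₀ OR OR OR +`. -/
def sPat (cl : Clause3) : ℕ → ℕ → PColor := fun x y =>
  match y, x with
  | 0, 0 => PColor.aC
  | 0, 1 => litColor cl.1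
  | 0, 2 => litColor cl.2.1
  | 0, 3 => litColor cl.2.2
  | 0, _ => PColor.bW
  | 1, 0 => PColor.arrW 0
  | 1, 4 => PColor.plus
  | _, _ => PColor.orC

/-- A rectangular block: width, height and contents. -/
abbrev PBlock := ℕ × ℕ × (ℕ → ℕ → PColor)

/-- The list of subpatterns of `P_F`: `p`, `q₁, …, q₅`, then `r₁(v), r₂(v), r₃(v)`
for every variable `v`, then `s(C)` for every clause `C`. -/
def blocksOf (F : CNF3) : List PBlock :=
  [(16, 2, pPat), (4, 4, qPat 0), (4, 4, qPat 1), (4, 4, qPat 2), (4, 4, qPat 3),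
    (6, 3, q5Pat)]
    ++ (List.range F.numVars).flatMap
        (fun v => [(2, 2, r1Pat v), (2, 2, r2Pat v), (4, 2, r3Pat v)])
    ++ F.clauses.map (fun cl => (5, 2, sPat cl))

/-- Place the blocks side by side (starting at column `x0`, occupying rows `1, …, h`),
with one column of unique colors before each block and after the last one; all the
remaining positions carry unique colors (`uniq` of the position code). -/
def place : List PBlock → ℕ → ℕ → ℕ → PColor
  | [], _, x, y => PColor.uniq (Nat.pair x y)
  | b :: bs, x0, x, y =>
      if x0 ≤ x ∧ x < x0 + b.1 ∧ 1 ≤ y ∧ y < 1 + b.2.1 then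
        b.2.2 (x - x0) (y - 1)
      else if x < x0 + b.1 + 1 then PColor.uniq (Nat.pair x y)
      else place bs (x0 + b.1 + 1) x y

/-- The pattern `P_F` of the paper, of height `6` and width `45 + 11·|V| + 6·ℓ`. -/
def patF (F : CNF3) : ℕ → ℕ → PColor := fun x y => place (blocksOf F) 1 x y

/-- The width of the pattern `P_F`. -/
def widthF (F : CNF3) : ℕ := 45 + 11 * F.numVars + 6 * F.clauses.length

/-- The three colors black, white, gray. -/
inductive BWG where
  | black | white | gray
deriving DecidableEq

/-- The number of tile types of a given color in a tile assembly system. -/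
def countColor {C G : Type} [DecidableEq C] (T : RTAS C G) (c : C) : ℕ :=
  (T.tiles.filter (fun t => t.color = c)).card

/-- The `ℓ × ℓ` supertile portraying the color `c ∈ [k]` (with `ℓ = 5k + 8`):
white bottom row and left column; gray top row and right column except for one
white position at index `c + 1` of each (the color counters); black interior. -/
def superPat (ℓ c : ℕ) : ℕ → ℕ → BWG := fun x y =>
  if y = 0 then BWG.white
  else if x = 0 then BWG.white
  else if y = ℓ - 1 then (if x = c + 1 then BWG.white else BWG.gray)
  else if x = ℓ - 1 then (if y = c + 1 then BWG.white else BWG.gray)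
  else BWG.black

/-- The black/white/gray pattern `Q` built from the `w × h` pattern `P` with colors
in `[k]`: each position `(x, y)` of `P` is replaced by the `ℓ × ℓ` supertile
portraying `P x y` (supertiles in the bottom row/left column of `P` are
incomplete, lacking their white bottom row/left column), and three gadget rows
and three gadget columns are appended at the top and at the right. -/
def QPat (k w h : ℕ) (P : ℕ → ℕ → ℕ) : ℕ → ℕ → BWG := fun X Y =>
  let ℓ := 5 * k + 8
  if X + 1 < ℓ * w ∧ Y + 1 < ℓ * h then
    superPat ℓ (P ((X + 1) / ℓ) ((Y + 1) / ℓ)) ((X + 1) % ℓ) ((Y + 1) % ℓ)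
  else if X + 1 < ℓ * w then
    -- the three gadget rows
    if Y = ℓ * h then (if X = k then BWG.white else BWG.gray)
    else (if (X + 1) % ℓ = ℓ - 1 then BWG.gray else BWG.black)
  else if Y + 1 < ℓ * h then
    -- the three gadget columns
    if X = ℓ * w then (if Y = k then BWG.white else BWG.gray)
    else (if (Y + 1) % ℓ = ℓ - 1 then BWG.gray else BWG.black)
  else
    -- the top-right 3 × 3 corner
    if X = ℓ * w ∨ Y = ℓ * h then BWG.gray else BWG.black

/-- Width of the pattern `Q`. -/
def QW (k w : ℕ) : ℕ := (5 * k + 8) * w + 2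

/-- Height of the pattern `Q`. -/
def QH (k h : ℕ) : ℕ := (5 * k + 8) * h + 2

/-- `(P, m) ∈ ℐ` (with `m = k + 3`): `P` is, up to an identification `ρ` of its
colors with `[k] = {1, …, k}`, the pattern `P_F` of a 3-CNF formula `F`. -/
def InI (k w h : ℕ) (P : ℕ → ℕ → ℕ) : Prop :=
  ∃ (F : CNF3) (ρ : PColor → ℕ),
    w = widthF F ∧ h = 6 ∧
    Set.BijOn ρ (↑(colorsOf (widthF F) 6 (patF F))) (Set.Icc 1 k) ∧
    ∀ x < w, ∀ y < h, P x y = ρ (patF F x y)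

/-- The tile assignment of the supertile at `(x, y)` of the supertile grid,
as a partial function on inner coordinates: inner position `(i, j)` corresponds
to the global position `(x·ℓ + i - 1, y·ℓ + j - 1)`; positions with `i = 0`
(resp. `j = 0`) exist only if `x ≥ 1` (resp. `y ≥ 1`). -/
def superOpt {G : Type} (ℓ : ℕ) (f : ℕ → ℕ → Tile BWG G) (x y : ℕ) :
    ℕ → ℕ → Option (Tile BWG G) := fun i j =>
  if i < ℓ ∧ j < ℓ ∧ (1 ≤ x ∨ 1 ≤ i) ∧ (1 ≤ y ∨ 1 ≤ j) then
    some (f (x * ℓ + i - 1) (y * ℓ + j - 1))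
  else none

/-- `s(N)`: the north output of a supertile, i.e. the north glue of its tile in
position `C₂` (inner position `(0, ℓ - 1)`); defined for `x ≥ 1`. -/
def stN {G : Type} (ℓ : ℕ) (f : ℕ → ℕ → Tile BWG G) (x y : ℕ) : G :=
  (f (x * ℓ - 1) (y * ℓ + ℓ - 2)).north

/-- `s(E)`: the east output of a supertile, i.e. the east glue of its tile in
position `C₁` (inner position `(ℓ - 1, 0)`); defined for `y ≥ 1`. -/
def stE {G : Type} (ℓ : ℕ) (f : ℕ → ℕ → Tile BWG G) (x y : ℕ) : G :=
  (f (x * ℓ + ℓ - 2) (y * ℓ - 1)).east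

/-- `s(S)`: the south input of a supertile, i.e. the south glue of its tile in
position `A` (inner position `(0, 0)`); defined for `x, y ≥ 1`. -/
def stS {G : Type} (ℓ : ℕ) (f : ℕ → ℕ → Tile BWG G) (x y : ℕ) : G :=
  (f (x * ℓ - 1) (y * ℓ - 1)).south

/-- `s(W)`: the west input of a supertile, i.e. the west glue of its tile in
position `A` (inner position `(0, 0)`); defined for `x, y ≥ 1`. -/
def stW {G : Type} (ℓ : ℕ) (f : ℕ → ℕ → Tile BWG G) (x y : ℕ) : G :=
  (f (x * ℓ - 1) (y * ℓ - 1)).west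

/-! ### Grids and their transposes -/

/-- A tile assignment `F` on `{1, …, a·ℓ + 2} × {1, …, b·ℓ + 2}` realizing the black/white/gray
pattern built from an `a × b` pattern `P` with colors in `{1, …, k}`.  Coordinates are shifted
by one, so that inner position `(i, j)` of supertile `(x, y)` is `(x·ℓ + i, y·ℓ + j)`.  Tiles are
elements of an arbitrary type with glue functions `tn te ts tw` and color `col`; in this form
transposing the picture only permutes the parameters (see `Grid.symm`).  Only those colors of
the gadget rows and columns that the argument uses are recorded. -/
structure Grid {τ G : Type} (T : Finset τ) (col : τ → BWG) (tn te ts tw : τ → G)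
    (F : ℕ → ℕ → τ) (k a b ℓ : ℕ) (P : ℕ → ℕ → ℕ) : Prop where
  hl : ℓ = 5 * k + 8
  ha : 1 ≤ a
  hb : 1 ≤ b
  dir : ∀ t ∈ T, ∀ u ∈ T, ts t = ts u → tw t = tw u → t = u
  nblack : (T.filter (fun t => col t = BWG.black)).card ≤ 1
  ngray : (T.filter (fun t => col t = BWG.gray)).card ≤ 2 * k + 3
  nwhite : (T.filter (fun t => col t = BWG.white)).card ≤ 5 * k + 5
  hP : ∀ x < a, ∀ y < b, 1 ≤ P x y ∧ P x y ≤ k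
  mem : ∀ X Y, 1 ≤ X → X ≤ a * ℓ + 2 → 1 ≤ Y → Y ≤ b * ℓ + 2 → F X Y ∈ T
  hor : ∀ X X' Y, X' = X + 1 → 1 ≤ X → X' ≤ a * ℓ + 2 → 1 ≤ Y → Y ≤ b * ℓ + 2 →
    tw (F X' Y) = te (F X Y)
  ver : ∀ X Y Y', Y' = Y + 1 → 1 ≤ X → X ≤ a * ℓ + 2 → 1 ≤ Y → Y' ≤ b * ℓ + 2 →
    ts (F X Y') = tn (F X Y)
  cIn : ∀ x < a, ∀ y < b, ∀ i j, 1 ≤ i → i + 2 ≤ ℓ → 1 ≤ j → j + 2 ≤ ℓ →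
    col (F (x * ℓ + i) (y * ℓ + j)) = BWG.black
  cTop : ∀ x < a, ∀ y < b, ∀ i, 1 ≤ i → i < ℓ →
    col (F (x * ℓ + i) (y * ℓ + (ℓ - 1))) = if i = P x y + 1 then BWG.white else BWG.gray
  cRight : ∀ x < a, ∀ y < b, ∀ j, 1 ≤ j → j < ℓ →
    col (F (x * ℓ + (ℓ - 1)) (y * ℓ + j)) = if j = P x y + 1 then BWG.white else BWG.gray
  cBot : ∀ x < a, ∀ y < b, ∀ i < ℓ, 1 ≤ y → 1 ≤ x * ℓ + i →
    col (F (x * ℓ + i) (y * ℓ)) = BWG.white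
  cLeft : ∀ x < a, ∀ y < b, ∀ j < ℓ, 1 ≤ x → 1 ≤ y * ℓ + j →
    col (F (x * ℓ) (y * ℓ + j)) = BWG.white
  cRow0 : ∀ X, 1 ≤ X → X < ℓ →
    col (F X (b * ℓ)) = if X = ℓ - 1 then BWG.gray else BWG.black
  cRow1 : ∀ X, 1 ≤ X → X < ℓ →
    col (F X (b * ℓ + 1)) = if X = k + 1 then BWG.white else BWG.gray
  cRow2 : ∀ X, 1 ≤ X → X + 2 ≤ ℓ → col (F X (b * ℓ + 2)) = BWG.black
  cCol0 : ∀ Y, 1 ≤ Y → Y < ℓ →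
    col (F (a * ℓ) Y) = if Y = ℓ - 1 then BWG.gray else BWG.black
  cCol1 : ∀ Y, 1 ≤ Y → Y < ℓ →
    col (F (a * ℓ + 1) Y) = if Y = k + 1 then BWG.white else BWG.gray
  cCol2 : ∀ Y, 1 ≤ Y → Y + 2 ≤ ℓ → col (F (a * ℓ + 2) Y) = BWG.black

namespace Grid

variable {τ G : Type} {T : Finset τ} {col : τ → BWG} {tn te ts tw : τ → G}
  {F : ℕ → ℕ → τ} {k a b ℓ : ℕ} {P : ℕ → ℕ → ℕ}

/-- Transposing the picture exchanges north with east and south with west. -/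
theorem symm (g : Grid T col tn te ts tw F k a b ℓ P) :
    Grid T col te tn tw ts (fun X Y => F Y X) k b a ℓ (fun x y => P y x) where
  hl := g.hl
  ha := g.hb
  hb := g.ha
  dir := fun t ht u hu h1 h2 => g.dir t ht u hu h2 h1
  nblack := g.nblack
  ngray := g.ngray
  nwhite := g.nwhite
  hP := fun x hx y hy => g.hP y hy x hx
  mem := fun X Y h1 h2 h3 h4 => g.mem Y X h3 h4 h1 h2
  hor := fun X X' Y h h1 h2 h3 h4 => g.ver Y X X' h h3 h4 h1 h2
  ver := fun X Y Y' h h1 h2 h3 h4 => g.hor Y Y' X h h3 h4 h1 h2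
  cIn := fun x hx y hy i j h1 h2 h3 h4 => g.cIn y hy x hx j i h3 h4 h1 h2
  cTop := fun x hx y hy i h1 h2 => g.cRight y hy x hx i h1 h2
  cRight := fun x hx y hy i h1 h2 => g.cTop y hy x hx i h1 h2
  cBot := fun x hx y hy i hi h1 h2 => g.cLeft y hy x hx i hi h1 h2
  cLeft := fun x hx y hy i hi h1 h2 => g.cBot y hy x hx i hi h1 h2
  cRow0 := g.cCol0
  cRow1 := g.cCol1
  cRow2 := g.cCol2
  cCol0 := g.cRow0
  cCol1 := g.cRow1
  cCol2 := g.cRow2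

theorem bound {x a ℓ : ℕ} (hx : x < a) : x * ℓ + ℓ ≤ a * ℓ := by
  have := Nat.mul_le_mul_right ℓ (Nat.succ_le_of_lt hx)
  rwa [Nat.succ_mul] at this

theorem mulsucc (x ℓ : ℕ) : (x + 1) * ℓ = x * ℓ + ℓ := Nat.succ_mul x ℓ

theorem k_pos (g : Grid T col tn te ts tw F k a b ℓ P) : 1 ≤ k := by
  have := g.hP 0 g.ha 0 g.hb
  omega

theorem la (g : Grid T col tn te ts tw F k a b ℓ P) : ℓ ≤ a * ℓ := by
  have := bound (ℓ := ℓ) g.ha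
  omega

theorem lb (g : Grid T col tn te ts tw F k a b ℓ P) : ℓ ≤ b * ℓ := g.symm.la

/-! ### The black tile -/

theorem cBlack (g : Grid T col tn te ts tw F k a b ℓ P) {i j : ℕ} (hi : 1 ≤ i) (hi' : i + 2 ≤ ℓ)
    (hj : 1 ≤ j) (hj' : j + 2 ≤ ℓ) : col (F i j) = BWG.black := by
  simpa using g.cIn 0 g.ha 0 g.hb i j hi hi' hj hj'

theorem mem11 (g : Grid T col tn te ts tw F k a b ℓ P) : F 1 1 ∈ T :=
  g.mem 1 1 le_rfl (by omega) le_rfl (by omega)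

theorem col11 (g : Grid T col tn te ts tw F k a b ℓ P) : col (F 1 1) = BWG.black := by
  have := g.hl
  exact g.cBlack le_rfl (by omega) le_rfl (by omega)

theorem black_eq (g : Grid T col tn te ts tw F k a b ℓ P) {t : τ} (ht : t ∈ T)
    (hc : col t = BWG.black) : t = F 1 1 :=
  Finset.card_le_one.1 g.nblack t (Finset.mem_filter.2 ⟨ht, hc⟩) (F 1 1)
    (Finset.mem_filter.2 ⟨g.mem11, g.col11⟩)

theorem black_n (g : Grid T col tn te ts tw F k a b ℓ P) : tn (F 1 1) = ts (F 1 1) := by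
  have := g.hl
  have h := g.la
  have h' := g.lb
  have h2 : F 1 2 = F 1 1 := g.black_eq (g.mem 1 2 le_rfl (by omega) (by omega) (by omega))
    (g.cBlack le_rfl (by omega) (by omega) (by omega))
  have h3 := g.ver 1 1 2 rfl le_rfl (by omega) le_rfl (by omega)
  rw [h2] at h3
  exact h3.symm

theorem not_both (g : Grid T col tn te ts tw F k a b ℓ P) {t : τ} (ht : t ∈ T)
    (hc : col t ≠ BWG.black) (hs : ts t = ts (F 1 1)) : tw t ≠ tw (F 1 1) := by
  intro hw
  exact hc (by rw [g.dir t ht _ g.mem11 hs hw]; exact g.col11)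

/-- Tiles above a black tile have the south glue of the black tile. -/
theorem south_of_black (g : Grid T col tn te ts tw F k a b ℓ P) {X Y Y' : ℕ} (hY : Y' = Y + 1)
    (h1 : 1 ≤ X) (h2 : X ≤ a * ℓ + 2) (h3 : 1 ≤ Y) (h4 : Y' ≤ b * ℓ + 2)
    (hc : col (F X Y) = BWG.black) : ts (F X Y') = ts (F 1 1) := by
  rw [g.ver X Y Y' hY h1 h2 h3 h4, g.black_eq (g.mem X Y h1 h2 h3 (by omega)) hc, g.black_n]

/-- Tiles below a black tile have the south glue of the black tile as north glue. -/
theorem north_of_black (g : Grid T col tn te ts tw F k a b ℓ P) {X Y Y' : ℕ} (hY : Y' = Y + 1)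
    (h1 : 1 ≤ X) (h2 : X ≤ a * ℓ + 2) (h3 : 1 ≤ Y) (h4 : Y' ≤ b * ℓ + 2)
    (hc : col (F X Y') = BWG.black) : tn (F X Y) = ts (F 1 1) := by
  rw [← g.ver X Y Y' hY h1 h2 h3 h4, g.black_eq (g.mem X Y' h1 h2 (by omega) h4) hc]

/-! ### Horizontal chains -/

/-- Two horizontal chains with the same south inputs and the same first tile coincide. -/
theorem chain_eq (g : Grid T col tn te ts tw F k a b ℓ P) {t u : ℕ → τ} {N : ℕ} (h0 : t 0 = u 0)
    (ht : ∀ i ≤ N, t i ∈ T) (hu : ∀ i ≤ N, u i ∈ T)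
    (hs : ∀ i ≤ N, ts (t i) = ts (u i))
    (htw : ∀ i < N, tw (t (i + 1)) = te (t i)) (huw : ∀ i < N, tw (u (i + 1)) = te (u i)) :
    ∀ i ≤ N, t i = u i := by
  intro i
  induction i with
  | zero => intro _; exact h0
  | succ i ih =>
    intro hi
    exact g.dir _ (ht _ hi) _ (hu _ hi) (hs _ hi)
      (by rw [htw i (by omega), huw i (by omega), ih (by omega)])

/-- A long monochromatic chain whose south inputs all equal the black glue runs into a cycle,
so its last tile has occurred before. -/
theorem chain_cycle (g : Grid T col tn te ts tw F k a b ℓ P) {t : ℕ → τ} {N : ℕ} {c : BWG}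
    (ht : ∀ i ≤ N, t i ∈ T) (hs : ∀ i ≤ N, ts (t i) = ts (F 1 1)) (hc : ∀ i ≤ N, col (t i) = c)
    (htw : ∀ i < N, tw (t (i + 1)) = te (t i))
    (hN : (T.filter (fun t => col t = c)).card ≤ N) :
    ∃ i < N, t N = t i := by
  obtain ⟨i, hi, j, hj, hij, he⟩ := Finset.exists_ne_map_eq_of_card_lt_of_maps_to
    (s := Finset.range (N + 1)) (t := T.filter (fun t => col t = c)) (f := t)
    (by rw [Finset.card_range]; omega)
    (fun i hi => by
      have hi : i < N + 1 := by simpa using hi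
      exact Finset.mem_coe.2 (Finset.mem_filter.2 ⟨ht i (by omega), hc i (by omega)⟩))
  wlog hlt : i < j generalizing i j
  · exact this j hj i hi hij.symm he.symm (by omega)
  simp only [Finset.mem_range] at hi hj
  have h := g.chain_eq (t := fun n => t (i + n)) (u := fun n => t (j + n)) (N := N - j)
    (by simpa using he) (fun n hn => ht _ (by omega)) (fun n hn => ht _ (by omega))
    (fun n hn => by rw [hs _ (by omega), hs _ (by omega)])
    (fun n hn => htw (i + n) (by omega)) (fun n hn => htw (j + n) (by omega)) (N - j) le_rfl
  refine ⟨i + (N - j), by omega, ?_⟩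
  have h' : t (i + (N - j)) = t (j + (N - j)) := h
  rw [h']
  congr 1
  omega

/-! ### The gray tiles and the color counters -/

theorem hg_mem (g : Grid T col tn te ts tw F k a b ℓ P) {i : ℕ} (h1 : 1 ≤ i) (h2 : i + 2 ≤ ℓ) :
    F i (b * ℓ + 1) ∈ T := by
  have := g.la
  exact g.mem _ _ h1 (by omega) (by omega) (by omega)

theorem hg_s (g : Grid T col tn te ts tw F k a b ℓ P) {i : ℕ} (h1 : 1 ≤ i) (h2 : i + 2 ≤ ℓ) :
    ts (F i (b * ℓ + 1)) = ts (F 1 1) := by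
  have := g.la
  have := g.lb
  refine g.south_of_black (Y := b * ℓ) rfl h1 (by omega) (by omega) (by omega) ?_
  rw [g.cRow0 i h1 (by omega), if_neg (by omega)]

theorem hg_n (g : Grid T col tn te ts tw F k a b ℓ P) {i : ℕ} (h1 : 1 ≤ i) (h2 : i + 2 ≤ ℓ) :
    tn (F i (b * ℓ + 1)) = ts (F 1 1) := by
  have := g.la
  exact g.north_of_black (Y' := b * ℓ + 2) rfl h1 (by omega) (by omega) (by omega)
    (g.cRow2 i h1 h2)

theorem hg_w (g : Grid T col tn te ts tw F k a b ℓ P) {i : ℕ} (h1 : 1 ≤ i) (h2 : i + 3 ≤ ℓ) :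
    tw (F (i + 1) (b * ℓ + 1)) = te (F i (b * ℓ + 1)) := by
  have := g.la
  exact g.hor _ _ _ rfl h1 (by omega) (by omega) (by omega)

theorem hg_shift (g : Grid T col tn te ts tw F k a b ℓ P) {i j n : ℕ} (h1 : 1 ≤ i) (h2 : 1 ≤ j)
    (hi : i + n + 2 ≤ ℓ) (hj : j + n + 2 ≤ ℓ) (he : F i (b * ℓ + 1) = F j (b * ℓ + 1)) :
    F (i + n) (b * ℓ + 1) = F (j + n) (b * ℓ + 1) :=
  g.chain_eq (t := fun n => F (i + n) (b * ℓ + 1)) (u := fun n => F (j + n) (b * ℓ + 1)) (N := n)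
    (by simpa using he)
    (fun m hm => g.hg_mem (by omega) (by omega)) (fun m hm => g.hg_mem (by omega) (by omega))
    (fun m hm => by rw [g.hg_s (by omega) (by omega), g.hg_s (by omega) (by omega)])
    (fun m hm => g.hg_w (i := i + m) (by omega) (by omega))
    (fun m hm => g.hg_w (i := j + m) (by omega) (by omega)) n le_rfl

/-- A counting tile of the gadget row differs from the tiles to its right (up to position `k + 3`):
otherwise the white tile at position `k + 1` would be repeated. -/
theorem hg_ne (g : Grid T col tn te ts tw F k a b ℓ P) {i j : ℕ} (h1 : 1 ≤ i) (hik : i ≤ k)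
    (hij : i < j) (hj : j ≤ k + 3) : F i (b * ℓ + 1) ≠ F j (b * ℓ + 1) := by
  intro he
  have hl := g.hl
  have h := g.hg_shift (n := k + 1 - i) h1 (by omega) (by omega) (by omega) he
  have h1 := congrArg col h
  rw [g.cRow1 _ (by omega) (by omega), g.cRow1 _ (by omega) (by omega), if_pos (by omega),
    if_neg (by omega)] at h1
  cases h1

open Classical in
/-- The gray tiles of horizontal color counters. -/
noncomputable def GH (T : Finset τ) (col : τ → BWG) (ts : τ → G) (F : ℕ → ℕ → τ) : Finset τ :=
  T.filter (fun t => col t = BWG.gray ∧ ts t = ts (F 1 1))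

open Classical in
theorem GH_sub (g : Grid T col tn te ts tw F k a b ℓ P) :
    ((Finset.Icc 1 (k + 2)).erase (k + 1)).image (fun i => F i (b * ℓ + 1)) ⊆ GH T col ts F := by
  have hl := g.hl
  intro t ht
  obtain ⟨i, hi, rfl⟩ := Finset.mem_image.1 ht
  simp only [Finset.mem_erase, Finset.mem_Icc] at hi
  refine Finset.mem_filter.2 ⟨g.hg_mem (by omega) (by omega), ?_, g.hg_s (by omega) (by omega)⟩
  rw [g.cRow1 _ (by omega) (by omega), if_neg (by omega)]

open Classical in
theorem GH_card_image (g : Grid T col tn te ts tw F k a b ℓ P) :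
    (((Finset.Icc 1 (k + 2)).erase (k + 1)).image (fun i => F i (b * ℓ + 1))).card = k + 1 := by
  rw [Finset.card_image_of_injOn, Finset.card_erase_of_mem (by simp), Nat.card_Icc]
  · omega
  · intro i hi j hj he
    simp only [Finset.coe_erase, Set.mem_sdiff, Finset.coe_Icc, Set.mem_Icc,
      Set.mem_singleton_iff] at hi hj
    by_contra hne
    rcases Nat.lt_or_gt_of_ne hne with h | h
    · exact g.hg_ne hi.1.1 (by omega) h (by omega) he
    · exact g.hg_ne hj.1.1 (by omega) h (by omega) he.symm

theorem top_mem (g : Grid T col tn te ts tw F k a b ℓ P) {x y i : ℕ} (hx : x < a) (hy : y < b)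
    (h0 : 1 ≤ x * ℓ + i) (h2 : i < ℓ) : F (x * ℓ + i) (y * ℓ + (ℓ - 1)) ∈ T := by
  have := bound (ℓ := ℓ) hx
  have := bound (ℓ := ℓ) hy
  have := g.hl
  exact g.mem _ _ h0 (by omega) (by omega) (by omega)

theorem top_s (g : Grid T col tn te ts tw F k a b ℓ P) {x y i : ℕ} (hx : x < a) (hy : y < b)
    (h1 : 1 ≤ i) (h2 : i + 2 ≤ ℓ) : ts (F (x * ℓ + i) (y * ℓ + (ℓ - 1))) = ts (F 1 1) := by
  have := bound (ℓ := ℓ) hx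
  have := bound (ℓ := ℓ) hy
  have := g.hl
  exact g.south_of_black (Y := y * ℓ + (ℓ - 2)) (by omega) (by omega) (by omega) (by omega)
    (by omega) (g.cIn x hx y hy _ _ h1 h2 (by omega) (by omega))

theorem top_w (g : Grid T col tn te ts tw F k a b ℓ P) {x y i i' : ℕ} (hx : x < a) (hy : y < b)
    (hi : i' = i + 1) (h0 : 1 ≤ x * ℓ + i) (h2 : i' < ℓ) :
    tw (F (x * ℓ + i') (y * ℓ + (ℓ - 1))) = te (F (x * ℓ + i) (y * ℓ + (ℓ - 1))) := by
  have := bound (ℓ := ℓ) hx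
  have := bound (ℓ := ℓ) hy
  have := g.hl
  exact g.hor _ _ _ (by omega) h0 (by omega) (by omega) (by omega)

/-- The gray corner of a supertile is not a vertical counter tile: these have the west glue of the
black tile. -/
theorem corner_w (g : Grid T col tn te ts tw F k a b ℓ P) {x y : ℕ} (hx : x < a) (hy : y < b) :
    tw (F (x * ℓ + (ℓ - 1)) (y * ℓ + (ℓ - 1))) ≠ tw (F 1 1) := by
  have hl := g.hl
  have hc := g.hP x hx y hy
  have hT := g.ngray
  -- the gray run behind the white counter position is longer than the number of gray tiles
  set c := P x y with hcdef
  set N := ℓ - 4 - c with hN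
  obtain ⟨i, hi, he⟩ := g.chain_cycle (c := BWG.gray) (N := N)
    (t := fun i => F (x * ℓ + (c + 2 + i)) (y * ℓ + (ℓ - 1)))
    (fun i hi => g.top_mem hx hy (by omega) (by omega))
    (fun i hi => g.top_s hx hy (by omega) (by omega))
    (fun i hi => by rw [g.cTop x hx y hy _ (by omega) (by omega), if_neg (by omega)])
    (fun i hi => g.top_w hx hy (by omega) (by omega) (by omega)) (by omega)
  rw [g.top_w hx hy (i := c + 2 + N) (by omega) (by omega) (by omega), he,
    ← g.top_w hx hy (i' := c + 2 + i + 1) rfl (by omega) (by omega)]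
  refine g.not_both (g.top_mem hx hy (by omega) (by omega)) ?_
    (g.top_s hx hy (by omega) (by omega))
  rw [g.cTop x hx y hy _ (by omega) (by omega), if_neg (by omega)]
  simp

/-- Horizontal counter tiles, vertical counter tiles and the corner are disjoint, so the gray
budget is tight. -/
theorem GH_card (g : Grid T col tn te ts tw F k a b ℓ P) : (GH T col ts F).card ≤ k + 1 := by
  classical
  have hl := g.hl
  have h2 : k + 1 ≤ (GH T col tw (fun X Y => F Y X)).card :=
    g.symm.GH_card_image ▸ Finset.card_le_card g.symm.GH_sub
  set K := F (0 * ℓ + (ℓ - 1)) (0 * ℓ + (ℓ - 1)) with hK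
  have hKw := g.corner_w g.ha g.hb
  have hKs := g.symm.corner_w g.hb g.ha
  have hKT : K ∈ T := g.top_mem g.ha g.hb (by omega) (by omega)
  have hPc := g.hP 0 g.ha 0 g.hb
  have hKc : col K = BWG.gray := by
    rw [hK, g.cTop 0 g.ha 0 g.hb _ (by omega) (by omega), if_neg (by omega)]
  have hd : Disjoint (GH T col ts F) (GH T col tw (fun X Y => F Y X)) := by
    rw [Finset.disjoint_left]
    intro t ht ht'
    have ht := Finset.mem_filter.1 ht
    have ht' := Finset.mem_filter.1 ht'
    exact g.not_both ht.1 (by rw [ht.2.1]; simp) ht.2.2 ht'.2.2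
  have hKn : K ∉ GH T col ts F ∪ GH T col tw (fun X Y => F Y X) := by
    intro h
    rcases Finset.mem_union.1 h with h | h
    · exact hKs (Finset.mem_filter.1 h).2.2
    · exact hKw (Finset.mem_filter.1 h).2.2
  have hsub : insert K (GH T col ts F ∪ GH T col tw (fun X Y => F Y X)) ⊆
      T.filter (fun t => col t = BWG.gray) := by
    intro t ht
    rcases Finset.mem_insert.1 ht with rfl | h
    · exact Finset.mem_filter.2 ⟨hKT, hKc⟩
    · rcases Finset.mem_union.1 h with h | h
      · exact Finset.mem_filter.2 ⟨(Finset.mem_filter.1 h).1, (Finset.mem_filter.1 h).2.1⟩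
      · exact Finset.mem_filter.2 ⟨(Finset.mem_filter.1 h).1, (Finset.mem_filter.1 h).2.1⟩
  have hcard := Finset.card_le_card hsub
  rw [Finset.card_insert_of_notMem hKn, Finset.card_union_of_disjoint hd] at hcard
  have := g.ngray
  omega

/-- Every gray tile with the black glue as south input occurs in the gadget row. -/
theorem gray_cases (g : Grid T col tn te ts tw F k a b ℓ P) {t : τ} (ht : t ∈ T)
    (hc : col t = BWG.gray) (hs : ts t = ts (F 1 1)) :
    ∃ i, 1 ≤ i ∧ i ≤ k + 2 ∧ i ≠ k + 1 ∧ t = F i (b * ℓ + 1) := by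
  classical
  have h := Finset.eq_of_subset_of_card_le g.GH_sub (by rw [g.GH_card_image]; exact g.GH_card)
  have h' : t ∈ GH T col ts F := Finset.mem_filter.2 ⟨ht, hc, hs⟩
  rw [← h] at h'
  obtain ⟨i, hi, rfl⟩ := Finset.mem_image.1 h'
  simp only [Finset.mem_erase, Finset.mem_Icc] at hi
  exact ⟨i, by omega, by omega, hi.1, rfl⟩

/-- Behind the white tile of a counter, a single gray tile repeats itself. -/
theorem hg_loop (g : Grid T col tn te ts tw F k a b ℓ P) :
    F (k + 3) (b * ℓ + 1) = F (k + 2) (b * ℓ + 1) := by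
  have hl := g.hl
  obtain ⟨i, h1, h2, h3, he⟩ := g.gray_cases (t := F (k + 3) (b * ℓ + 1))
    (g.hg_mem (by omega) (by omega)) (by rw [g.cRow1 _ (by omega) (by omega), if_neg (by omega)])
    (g.hg_s (by omega) (by omega))
  by_cases hi : i = k + 2
  · rw [he, hi]
  · exact absurd he.symm (g.hg_ne h1 (by omega) (by omega) le_rfl)

/-- The full counting sequence of horizontal counter tiles, prolonged by the looping tile. -/
def hh (F : ℕ → ℕ → τ) (k b ℓ n : ℕ) : τ := F (min n (k + 2)) (b * ℓ + 1)

theorem hh_w (g : Grid T col tn te ts tw F k a b ℓ P) {n : ℕ} (hn : 1 ≤ n) :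
    tw (hh F k b ℓ (n + 1)) = te (hh F k b ℓ n) := by
  have hl := g.hl
  unfold hh
  by_cases h : n ≤ k + 1
  · rw [min_eq_left (by omega), min_eq_left (by omega), g.hg_w hn (by omega)]
  · rw [min_eq_right (by omega), min_eq_right (by omega), ← g.hg_loop,
      g.hg_w (by omega) (by omega), g.hg_loop]

/-- The top row of every supertile is a segment of the counting sequence. -/
theorem top_row (g : Grid T col tn te ts tw F k a b ℓ P) {x y : ℕ} (hx : x < a) (hy : y < b) :
    ∃ m, 1 ≤ m ∧ ∀ i, 1 ≤ i → i + 2 ≤ ℓ →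
      F (x * ℓ + i) (y * ℓ + (ℓ - 1)) = hh F k b ℓ (m + i - 1) := by
  have hl := g.hl
  have hc := g.hP x hx y hy
  obtain ⟨m, h1, h2, h3, he⟩ := g.gray_cases (t := F (x * ℓ + 1) (y * ℓ + (ℓ - 1)))
    (g.top_mem hx hy (by omega) (by omega))
    (by rw [g.cTop x hx y hy _ (by omega) (by omega), if_neg (by omega)])
    (g.top_s hx hy (by omega) (by omega))
  have key := g.chain_eq (N := ℓ - 3) (t := fun i => F (x * ℓ + (1 + i)) (y * ℓ + (ℓ - 1)))
    (u := fun i => hh F k b ℓ (m + i))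
    (by simp only [add_zero]; rw [he, hh, min_eq_left h2])
    (fun i hi => g.top_mem hx hy (by omega) (by omega))
    (fun i hi => g.hg_mem (by omega) (by omega))
    (fun i hi => by
      rw [g.top_s hx hy (by omega) (by omega)]
      exact (g.hg_s (by omega) (by omega)).symm)
    (fun i hi => g.top_w hx hy (by omega) (by omega) (by omega))
    (fun i hi => g.hh_w (n := m + i) (by omega))
  refine ⟨m, h1, fun i hi hi' => ?_⟩
  have h := key (i - 1) (by omega)
  rw [show 1 + (i - 1) = i by omega] at h
  rw [h]
  congr 1
  omega

theorem top_n (g : Grid T col tn te ts tw F k a b ℓ P) {x y i : ℕ} (hx : x < a) (hy : y < b)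
    (h1 : 1 ≤ i) (h2 : i + 2 ≤ ℓ) : tn (F (x * ℓ + i) (y * ℓ + (ℓ - 1))) = ts (F 1 1) := by
  have hl := g.hl
  obtain ⟨m, hm, h⟩ := g.top_row hx hy
  rw [h i h1 h2]
  exact g.hg_n (by omega) (by omega)

theorem corner_w_eq (g : Grid T col tn te ts tw F k a b ℓ P) {x y : ℕ} (hx : x < a) (hy : y < b) :
    tw (F (x * ℓ + (ℓ - 1)) (y * ℓ + (ℓ - 1))) = te (F (k + 2) (b * ℓ + 1)) := by
  have hl := g.hl
  obtain ⟨m, hm, h⟩ := g.top_row hx hy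
  rw [g.top_w hx hy (i := ℓ - 2) (by omega) (by omega) (by omega), h _ (by omega) (by omega), hh,
    min_eq_right (by omega)]

theorem corner_eq (g : Grid T col tn te ts tw F k a b ℓ P) {x y : ℕ} (hx : x < a) (hy : y < b) :
    F (x * ℓ + (ℓ - 1)) (y * ℓ + (ℓ - 1)) = F (ℓ - 1) (ℓ - 1) := by
  have hl := g.hl
  have h0 := g.corner_w_eq g.ha g.hb
  have h0' := g.symm.corner_w_eq g.hb g.ha
  have hm := g.top_mem g.ha g.hb (i := ℓ - 1) (by omega) (by omega)
  simp only [Nat.zero_mul, Nat.zero_add] at h0 h0' hm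
  exact g.dir _ (g.top_mem hx hy (by omega) (by omega)) _ hm
    ((g.symm.corner_w_eq hy hx).trans h0'.symm) ((g.corner_w_eq hx hy).trans h0.symm)

/-- The tile in the upper left corner determines the portrayed color. -/
theorem color_of_C2 (g : Grid T col tn te ts tw F k a b ℓ P) {x y x' y' : ℕ} (hx : x < a)
    (hy : y < b) (hx' : x' < a) (hy' : y' < b) (h1 : 1 ≤ x) (h1' : 1 ≤ x')
    (he : F (x * ℓ) (y * ℓ + (ℓ - 1)) = F (x' * ℓ) (y' * ℓ + (ℓ - 1))) : P x y = P x' y' := by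
  have hl := g.hl
  have hc := g.hP x hx y hy
  have hc' := g.hP x' hx' y' hy'
  have hp := Nat.mul_le_mul_right ℓ h1
  have hp' := Nat.mul_le_mul_right ℓ h1'
  have w1 := g.top_w hx hy (i := 0) (i' := 1) rfl (by omega) (by omega)
  have w1' := g.top_w hx' hy' (i := 0) (i' := 1) rfl (by omega) (by omega)
  simp only [add_zero] at w1 w1'
  have hr : F (x * ℓ + 1) (y * ℓ + (ℓ - 1)) = F (x' * ℓ + 1) (y' * ℓ + (ℓ - 1)) := by
    refine g.dir _ (g.top_mem hx hy (by omega) (by omega)) _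
      (g.top_mem hx' hy' (by omega) (by omega)) ?_ ?_
    · rw [g.top_s hx hy (by omega) (by omega), g.top_s hx' hy' (by omega) (by omega)]
    · rw [w1, w1', he]
  have key := g.chain_eq (N := ℓ - 3) (t := fun i => F (x * ℓ + (1 + i)) (y * ℓ + (ℓ - 1)))
    (u := fun i => F (x' * ℓ + (1 + i)) (y' * ℓ + (ℓ - 1)))
    (by simpa using hr)
    (fun i hi => g.top_mem hx hy (by omega) (by omega))
    (fun i hi => g.top_mem hx' hy' (by omega) (by omega))
    (fun i hi => by
      rw [g.top_s hx hy (by omega) (by omega), g.top_s hx' hy' (by omega) (by omega)])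
    (fun i hi => g.top_w hx hy (by omega) (by omega) (by omega))
    (fun i hi => g.top_w hx' hy' (by omega) (by omega) (by omega)) (P x y) (by omega)
  have h := congrArg col key
  rw [g.cTop x hx y hy _ (by omega) (by omega), g.cTop x' hx' y' hy' _ (by omega) (by omega),
    if_pos (by omega)] at h
  by_contra hne
  rw [if_neg (by omega)] at h
  cases h

/-! ### The white bottom rows -/

theorem cell_mem (g : Grid T col tn te ts tw F k a b ℓ P) {x y i j : ℕ} (hx : x < a) (hy : y < b)
    (h0 : 1 ≤ x * ℓ + i) (h2 : i < ℓ) (h0' : 1 ≤ y * ℓ + j) (h2' : j < ℓ) :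
    F (x * ℓ + i) (y * ℓ + j) ∈ T := by
  have := bound (ℓ := ℓ) hx
  have := bound (ℓ := ℓ) hy
  exact g.mem _ _ h0 (by omega) (by omega) (by omega)

theorem pos {y : ℕ} (_ : Grid T col tn te ts tw F k a b ℓ P) (h1 : 1 ≤ y) : ℓ ≤ y * ℓ := by
  have := Nat.mul_le_mul_right ℓ h1
  omega

theorem bot_mem (g : Grid T col tn te ts tw F k a b ℓ P) {x y i : ℕ} (hx : x < a) (hy : y < b)
    (h1 : 1 ≤ y) (h0 : 1 ≤ x * ℓ + i) (h2 : i < ℓ) : F (x * ℓ + i) (y * ℓ) ∈ T := by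
  have := g.pos h1
  have := g.hl
  exact g.cell_mem hx hy h0 h2 (j := 0) (by omega) (by omega)

/-- The south inputs of a bottom row, apart from its first position, do not depend on the
supertile below: they are the black glue, up to the last one. -/
theorem bot_s (g : Grid T col tn te ts tw F k a b ℓ P) {x y i : ℕ} (hx : x < a) (hy : y < b)
    (h1 : 1 ≤ y) (hi : 1 ≤ i) (h2 : i + 2 ≤ ℓ) : ts (F (x * ℓ + i) (y * ℓ)) = ts (F 1 1) := by
  have := g.pos h1
  have hl := g.hl
  obtain ⟨y, rfl⟩ : ∃ z, y = z + 1 := ⟨y - 1, by omega⟩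
  have := bound (ℓ := ℓ) hx
  have := bound (ℓ := ℓ) hy
  have := mulsucc y ℓ
  rw [g.ver _ (y * ℓ + (ℓ - 1)) _ (by omega) (by omega) (by omega) (by omega) (by omega),
    g.top_n hx (by omega) hi h2]

theorem bot_s_last (g : Grid T col tn te ts tw F k a b ℓ P) {x y : ℕ} (hx : x < a) (hy : y < b)
    (h1 : 1 ≤ y) : ts (F (x * ℓ + (ℓ - 1)) (y * ℓ)) = tn (F (ℓ - 1) (ℓ - 1)) := by
  have := g.pos h1
  have hl := g.hl
  obtain ⟨y, rfl⟩ : ∃ z, y = z + 1 := ⟨y - 1, by omega⟩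
  have := bound (ℓ := ℓ) hx
  have := bound (ℓ := ℓ) hy
  have := mulsucc y ℓ
  rw [g.ver _ (y * ℓ + (ℓ - 1)) _ (by omega) (by omega) (by omega) (by omega) (by omega),
    g.corner_eq hx (by omega)]

theorem bot_w (g : Grid T col tn te ts tw F k a b ℓ P) {x y i i' : ℕ} (hx : x < a) (hy : y < b)
    (h1 : 1 ≤ y) (hi : i' = i + 1) (h0 : 1 ≤ x * ℓ + i) (h2 : i' < ℓ) :
    tw (F (x * ℓ + i') (y * ℓ)) = te (F (x * ℓ + i) (y * ℓ)) := by
  have := g.pos h1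
  have := g.hl
  have := bound (ℓ := ℓ) hx
  have := bound (ℓ := ℓ) hy
  exact g.hor _ _ _ (by omega) h0 (by omega) (by omega) (by omega)

theorem bot_eq (g : Grid T col tn te ts tw F k a b ℓ P) {x y x' y' : ℕ} (hx : x < a)
    (hy : y < b) (hx' : x' < a) (hy' : y' < b) (h1 : 1 ≤ x) (h1' : 1 ≤ x') (h2 : 1 ≤ y)
    (h2' : 1 ≤ y') (he : F (x * ℓ) (y * ℓ) = F (x' * ℓ) (y' * ℓ)) :
    ∀ i < ℓ, F (x * ℓ + i) (y * ℓ) = F (x' * ℓ + i) (y' * ℓ) := by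
  have hl := g.hl
  have hp := g.pos h1
  have hp' := g.pos h1'
  intro i hi
  refine g.chain_eq (N := ℓ - 1) (t := fun i => F (x * ℓ + i) (y * ℓ))
    (u := fun i => F (x' * ℓ + i) (y' * ℓ)) (by simpa using he)
    (fun i hi => g.bot_mem hx hy h2 (by omega) (by omega))
    (fun i hi => g.bot_mem hx' hy' h2' (by omega) (by omega)) ?_
    (fun i hi => g.bot_w hx hy h2 (by omega) (by omega) (by omega))
    (fun i hi => g.bot_w hx' hy' h2' (by omega) (by omega) (by omega)) i (by omega)
  intro i hi
  rcases Nat.eq_zero_or_pos i with rfl | h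
  · simpa using congrArg ts he
  · by_cases h' : i = ℓ - 1
    · subst h'
      rw [g.bot_s_last hx hy h2, g.bot_s_last hx' hy' h2']
    · rw [g.bot_s hx hy h2 (by omega) (by omega), g.bot_s hx' hy' h2' (by omega) (by omega)]

/-- A complete supertile is determined by its lower left tile. -/
theorem supertile_eq (g : Grid T col tn te ts tw F k a b ℓ P) {x y x' y' : ℕ} (hx : x < a)
    (hy : y < b) (hx' : x' < a) (hy' : y' < b) (h1 : 1 ≤ x) (h1' : 1 ≤ x') (h2 : 1 ≤ y)
    (h2' : 1 ≤ y') (he : F (x * ℓ) (y * ℓ) = F (x' * ℓ) (y' * ℓ)) :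
    ∀ j < ℓ, ∀ i < ℓ, F (x * ℓ + i) (y * ℓ + j) = F (x' * ℓ + i) (y' * ℓ + j) := by
  have hl := g.hl
  have hp := g.pos h1
  have hp' := g.pos h1'
  have hq := g.pos h2
  have hq' := g.pos h2'
  have := bound (ℓ := ℓ) hx
  have := bound (ℓ := ℓ) hy
  have := bound (ℓ := ℓ) hx'
  have := bound (ℓ := ℓ) hy'
  intro j
  induction j with
  | zero => exact fun _ i hi => g.bot_eq hx hy hx' hy' h1 h1' h2 h2' he i hi
  | succ j ihj =>
    intro hj i
    induction i with
    | zero =>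
      exact fun _ => g.symm.bot_eq hy hx hy' hx' h2 h2' h1 h1' he (j + 1) hj
    | succ i ihi =>
      intro hi
      refine g.dir _ (g.cell_mem hx hy (by omega) hi (by omega) hj) _
        (g.cell_mem hx' hy' (by omega) hi (by omega) hj) ?_ ?_
      · rw [g.ver _ (y * ℓ + j) _ (by omega) (by omega) (by omega) (by omega) (by omega),
          g.ver _ (y' * ℓ + j) _ (by omega) (by omega) (by omega) (by omega) (by omega),
          ihj (by omega) _ hi]
      · rw [g.hor (x * ℓ + i) _ _ (by omega) (by omega) (by omega) (by omega) (by omega),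
          g.hor (x' * ℓ + i) _ _ (by omega) (by omega) (by omega) (by omega) (by omega),
          ihi (by omega)]

/-- Equal second-to-last tiles of two bottom rows force equal last tiles. -/
theorem C1_of_B1 (g : Grid T col tn te ts tw F k a b ℓ P) {x y x' y' : ℕ} (hx : x < a)
    (hy : y < b) (hx' : x' < a) (hy' : y' < b) (h2 : 1 ≤ y) (h2' : 1 ≤ y')
    (he : F (x * ℓ + (ℓ - 2)) (y * ℓ) = F (x' * ℓ + (ℓ - 2)) (y' * ℓ)) :
    F (x * ℓ + (ℓ - 1)) (y * ℓ) = F (x' * ℓ + (ℓ - 1)) (y' * ℓ) := by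
  have hl := g.hl
  refine g.dir _ (g.bot_mem hx hy h2 (by omega) (by omega)) _
    (g.bot_mem hx' hy' h2' (by omega) (by omega)) ?_ ?_
  · rw [g.bot_s_last hx hy h2, g.bot_s_last hx' hy' h2']
  · rw [g.bot_w hx hy h2 (i := ℓ - 2) (by omega) (by omega) (by omega),
      g.bot_w hx' hy' h2' (i := ℓ - 2) (by omega) (by omega) (by omega), he]

/-! ### Classification of the white tiles -/

/-- `Meets T col ts tw σ ω c`: the tile with south glue `σ` and west glue `ω` exists in `T` and
has color `c`.  For a directed system `c` is unique.  A white tile `t` is classified by the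
colors of the tiles meeting the glues `(tn t, ω)`, `(σ, te t)`, `(ts t, ω)` and `(σ, tw t)`,
where `σ`, `ω` are the south and west glue of the black tile. -/
def Meets (T : Finset τ) (col : τ → BWG) (ts tw : τ → G) (σ ω : G) (c : BWG) : Prop :=
  ∃ t ∈ T, col t = c ∧ ts t = σ ∧ tw t = ω

theorem Meets.swap {σ ω : G} {c : BWG} (h : Meets T col ts tw σ ω c) :
    Meets T col tw ts ω σ c := by
  obtain ⟨t, h1, h2, h3, h4⟩ := h
  exact ⟨t, h1, h2, h4, h3⟩

theorem Meets.unique (g : Grid T col tn te ts tw F k a b ℓ P) {σ ω : G} {c c' : BWG}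
    (h : Meets T col ts tw σ ω c) (h' : Meets T col ts tw σ ω c') : c = c' := by
  obtain ⟨t, h1, h2, h3, h4⟩ := h
  obtain ⟨u, h1', h2', h3', h4'⟩ := h'
  rw [← h2, ← h2', g.dir t h1 u h1' (h3.trans h3'.symm) (h4.trans h4'.symm)]

theorem meets_black (g : Grid T col tn te ts tw F k a b ℓ P) :
    Meets T col ts tw (ts (F 1 1)) (tw (F 1 1)) BWG.black :=
  ⟨F 1 1, g.mem11, g.col11, rfl, rfl⟩

/-- Above the lower left tile stands a white tile. -/
theorem A_up (g : Grid T col tn te ts tw F k a b ℓ P) {x y : ℕ} (hx : x < a) (hy : y < b)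
    (h1 : 1 ≤ x) (h2 : 1 ≤ y) :
    Meets T col ts tw (tn (F (x * ℓ) (y * ℓ))) (tw (F 1 1)) BWG.white := by
  have hl := g.hl
  have := g.pos h1
  have := g.pos h2
  have := bound (ℓ := ℓ) hx
  have := bound (ℓ := ℓ) hy
  exact ⟨F (x * ℓ) (y * ℓ + 1), g.mem _ _ (by omega) (by omega) (by omega) (by omega),
    g.cLeft x hx y hy 1 (by omega) h1 (by omega),
    g.ver _ _ _ rfl (by omega) (by omega) (by omega) (by omega),
    g.symm.bot_s hy hx h1 le_rfl (by omega)⟩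

theorem B1_up (g : Grid T col tn te ts tw F k a b ℓ P) {x y : ℕ} (hx : x < a) (hy : y < b)
    (h2 : 1 ≤ y) :
    Meets T col ts tw (tn (F (x * ℓ + (ℓ - 2)) (y * ℓ))) (tw (F 1 1)) BWG.black := by
  have hl := g.hl
  have := g.pos h2
  have := bound (ℓ := ℓ) hx
  have := bound (ℓ := ℓ) hy
  rw [g.north_of_black (Y' := y * ℓ + 1) rfl (by omega) (by omega) (by omega) (by omega)
    (g.cIn x hx y hy _ _ (by omega) (by omega) le_rfl (by omega))]
  exact g.meets_black

/-- The white bottom row is so long that its second-to-last tile lies on a white cycle. -/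
theorem B1_right (g : Grid T col tn te ts tw F k a b ℓ P) {x y : ℕ} (hx : x < a) (hy : y < b)
    (h2 : 1 ≤ y) :
    Meets T col ts tw (ts (F 1 1)) (te (F (x * ℓ + (ℓ - 2)) (y * ℓ))) BWG.white := by
  have hl := g.hl
  have hT := g.nwhite
  obtain ⟨i, hi, he⟩ := g.chain_cycle (c := BWG.white) (N := ℓ - 3)
    (t := fun i => F (x * ℓ + (1 + i)) (y * ℓ))
    (fun i hi => g.bot_mem hx hy h2 (by omega) (by omega))
    (fun i hi => g.bot_s hx hy h2 (by omega) (by omega))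
    (fun i hi => g.cBot x hx y hy _ (by omega) h2 (by omega))
    (fun i hi => g.bot_w hx hy h2 (by omega) (by omega) (by omega)) (by omega)
  rw [show 1 + (ℓ - 3) = ℓ - 2 by omega] at he
  rw [he]
  exact ⟨F (x * ℓ + (1 + i + 1)) (y * ℓ), g.bot_mem hx hy h2 (by omega) (by omega),
    g.cBot x hx y hy _ (by omega) h2 (by omega), g.bot_s hx hy h2 (by omega) (by omega),
    g.bot_w hx hy h2 rfl (by omega) (by omega)⟩

theorem C1_up (g : Grid T col tn te ts tw F k a b ℓ P) {x y : ℕ} (hx : x < a) (hy : y < b)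
    (h2 : 1 ≤ y) :
    Meets T col ts tw (tn (F (x * ℓ + (ℓ - 1)) (y * ℓ))) (tw (F 1 1)) BWG.gray := by
  have hl := g.hl
  have hc := g.hP x hx y hy
  have := g.pos h2
  have := bound (ℓ := ℓ) hx
  have := bound (ℓ := ℓ) hy
  refine ⟨F (x * ℓ + (ℓ - 1)) (y * ℓ + 1), g.mem _ _ (by omega) (by omega) (by omega) (by omega),
    ?_, g.ver _ _ _ rfl (by omega) (by omega) (by omega) (by omega),
    g.symm.top_s hy hx le_rfl (by omega)⟩
  rw [g.cRight x hx y hy _ le_rfl (by omega), if_neg (by omega)]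

/-- The lower right tile of a supertile has the same south input as a gray tile of the first
gadget row. -/
theorem C1_down (g : Grid T col tn te ts tw F k a b ℓ P) {x y : ℕ} (hx : x < a) (hy : y < b)
    (h2 : 1 ≤ y) :
    Meets T col ts tw (ts (F (x * ℓ + (ℓ - 1)) (y * ℓ))) (tw (F 1 1)) BWG.gray := by
  have hl := g.hl
  have hb := g.hb
  have hla := g.la
  have hlb := g.lb
  obtain ⟨b', hb'⟩ : ∃ z, b = z + 1 := ⟨b - 1, by omega⟩
  have := mulsucc b' ℓ
  rw [← hb'] at this
  have hco := g.corner_eq g.ha (y := b') (by omega)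
  rw [Nat.zero_mul, Nat.zero_add] at hco
  rw [g.bot_s_last hx hy h2, ← hco]
  refine ⟨F (ℓ - 1) (b * ℓ), g.mem _ _ (by omega) (by omega) (by omega) (by omega), ?_, ?_, ?_⟩
  · rw [g.cRow0 _ (by omega) (by omega), if_pos rfl]
  · exact g.ver _ _ _ (by omega) (by omega) (by omega) (by omega) (by omega)
  · refine g.symm.south_of_black (Y := ℓ - 2) (X := b * ℓ) (by omega) (by omega) (by omega)
      (by omega) (by omega) ?_
    rw [g.cRow0 _ (by omega) (by omega), if_neg (by omega)]

theorem C1_left (g : Grid T col tn te ts tw F k a b ℓ P) {x y : ℕ} (hx : x < a) (hy : y < b)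
    (h2 : 1 ≤ y) :
    Meets T col ts tw (ts (F 1 1)) (tw (F (x * ℓ + (ℓ - 1)) (y * ℓ))) BWG.white := by
  have hl := g.hl
  rw [g.bot_w hx hy h2 (i := ℓ - 2) (by omega) (by omega) (by omega)]
  exact g.B1_right hx hy h2

theorem W_up (g : Grid T col tn te ts tw F k a b ℓ P) :
    Meets T col ts tw (tn (F (k + 1) (b * ℓ + 1))) (tw (F 1 1)) BWG.black := by
  have hl := g.hl
  rw [g.hg_n (by omega) (by omega)]
  exact g.meets_black

theorem W_down (g : Grid T col tn te ts tw F k a b ℓ P) :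
    Meets T col ts tw (ts (F (k + 1) (b * ℓ + 1))) (tw (F 1 1)) BWG.black := by
  have hl := g.hl
  rw [g.hg_s (by omega) (by omega)]
  exact g.meets_black

theorem W_right (g : Grid T col tn te ts tw F k a b ℓ P) :
    Meets T col ts tw (ts (F 1 1)) (te (F (k + 1) (b * ℓ + 1))) BWG.gray := by
  have hl := g.hl
  refine ⟨F (k + 2) (b * ℓ + 1), g.hg_mem (by omega) (by omega), ?_, g.hg_s (by omega) (by omega),
    g.hg_w (by omega) (by omega)⟩
  rw [g.cRow1 _ (by omega) (by omega), if_neg (by omega)]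

/-! ### Counting the white tiles -/

open Classical in
/-- The lower left tiles of complete supertiles. -/
noncomputable def SA (F : ℕ → ℕ → τ) (a b ℓ : ℕ) : Finset τ :=
  (Finset.Ico 1 a ×ˢ Finset.Ico 1 b).image (fun q => F (q.1 * ℓ) (q.2 * ℓ))

open Classical in
/-- The second-to-last tiles of white bottom rows. -/
noncomputable def SB1 (F : ℕ → ℕ → τ) (a b ℓ : ℕ) : Finset τ :=
  (Finset.range a ×ˢ Finset.Ico 1 b).image (fun q => F (q.1 * ℓ + (ℓ - 2)) (q.2 * ℓ))

open Classical in
/-- The last tiles of white bottom rows. -/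
noncomputable def SC1 (F : ℕ → ℕ → τ) (a b ℓ : ℕ) : Finset τ :=
  (Finset.range a ×ˢ Finset.Ico 1 b).image (fun q => F (q.1 * ℓ + (ℓ - 1)) (q.2 * ℓ))

theorem mem_SA {t : τ} : t ∈ SA F a b ℓ ↔
    ∃ x y, 1 ≤ x ∧ x < a ∧ 1 ≤ y ∧ y < b ∧ t = F (x * ℓ) (y * ℓ) := by
  classical
  simp only [SA, Finset.mem_image, Finset.mem_product, Finset.mem_Ico, Prod.exists]
  constructor
  · rintro ⟨x, y, ⟨⟨h1, h2⟩, h3, h4⟩, rfl⟩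
    exact ⟨x, y, h1, h2, h3, h4, rfl⟩
  · rintro ⟨x, y, h1, h2, h3, h4, rfl⟩
    exact ⟨x, y, ⟨⟨h1, h2⟩, h3, h4⟩, rfl⟩

theorem mem_SB1 {t : τ} : t ∈ SB1 F a b ℓ ↔
    ∃ x y, x < a ∧ 1 ≤ y ∧ y < b ∧ t = F (x * ℓ + (ℓ - 2)) (y * ℓ) := by
  classical
  simp only [SB1, Finset.mem_image, Finset.mem_product, Finset.mem_Ico, Finset.mem_range,
    Prod.exists]
  constructor
  · rintro ⟨x, y, ⟨h2, h3, h4⟩, rfl⟩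
    exact ⟨x, y, h2, h3, h4, rfl⟩
  · rintro ⟨x, y, h2, h3, h4, rfl⟩
    exact ⟨x, y, ⟨h2, h3, h4⟩, rfl⟩

theorem mem_SC1 {t : τ} : t ∈ SC1 F a b ℓ ↔
    ∃ x y, x < a ∧ 1 ≤ y ∧ y < b ∧ t = F (x * ℓ + (ℓ - 1)) (y * ℓ) := by
  classical
  simp only [SC1, Finset.mem_image, Finset.mem_product, Finset.mem_Ico, Finset.mem_range,
    Prod.exists]
  constructor
  · rintro ⟨x, y, ⟨h2, h3, h4⟩, rfl⟩
    exact ⟨x, y, h2, h3, h4, rfl⟩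
  · rintro ⟨x, y, h2, h3, h4, rfl⟩
    exact ⟨x, y, ⟨h2, h3, h4⟩, rfl⟩

theorem card_SC1_le (g : Grid T col tn te ts tw F k a b ℓ P) :
    (SC1 F a b ℓ).card ≤ (SB1 F a b ℓ).card := by
  classical
  have h : ∀ t ∈ SC1 F a b ℓ, ∃ u ∈ SB1 F a b ℓ, ∀ x y, x < a → 1 ≤ y → y < b →
      u = F (x * ℓ + (ℓ - 2)) (y * ℓ) → t = F (x * ℓ + (ℓ - 1)) (y * ℓ) := by
    intro t ht
    obtain ⟨x, y, h1, h2, h3, rfl⟩ := mem_SC1.1 ht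
    exact ⟨_, mem_SB1.2 ⟨x, y, h1, h2, h3, rfl⟩,
      fun x' y' h1' h2' h3' he => g.C1_of_B1 h1 h3 h1' h3' h2 h2' he⟩
  choose! φ hφ hφ' using h
  refine Finset.card_le_card_of_injOn φ (fun t ht => hφ t ht) ?_
  intro t ht u hu he
  obtain ⟨x, y, h1, h2, h3, hx⟩ := mem_SB1.1 (hφ t ht)
  rw [hφ' t ht x y h1 h2 h3 hx, hφ' u hu x y h1 h2 h3 (he ▸ hx)]

/-- The seven classes of white tiles are pairwise disjoint. -/
theorem white_count (g : Grid T col tn te ts tw F k a b ℓ P) :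
    (SA F a b ℓ).card + (SB1 F a b ℓ).card + (SC1 F a b ℓ).card +
      (SB1 (fun X Y => F Y X) b a ℓ).card + (SC1 (fun X Y => F Y X) b a ℓ).card + 2 ≤
    (T.filter (fun t => col t = BWG.white)).card := by
  classical
  have hl := g.hl
  set D : Finset τ := T.filter (fun t => col t = BWG.white) with hD
  set σ := ts (F 1 1) with hσ
  set ω := tw (F 1 1) with hω
  let M := Meets T col ts tw
  set Wh := F (k + 1) (b * ℓ + 1) with hWh
  set Wv := F (a * ℓ + 1) (k + 1) with hWv
  have uq : ∀ {p q : G} {c c' : BWG}, M p q c → M p q c' → c ≠ c' → False :=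
    fun h h' hne => hne (Meets.unique g h h')
  have hA : ∀ t ∈ SA F a b ℓ, t ∈ D ∧ M (tn t) ω BWG.white ∧ M σ (te t) BWG.white := by
    intro t ht
    obtain ⟨x, y, h1, h2, h3, h4, rfl⟩ := mem_SA.1 ht
    have := g.pos h1
    exact ⟨Finset.mem_filter.2 ⟨g.bot_mem h2 h4 h3 (i := 0) (by omega) (by omega),
      g.cBot x h2 y h4 0 (by omega) h3 (by omega)⟩, g.A_up h2 h4 h1 h3,
      (g.symm.A_up h4 h2 h3 h1).swap⟩
  have hB1 : ∀ t ∈ SB1 F a b ℓ, t ∈ D ∧ M (tn t) ω BWG.black ∧ M σ (te t) BWG.white := by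
    intro t ht
    obtain ⟨x, y, h2, h3, h4, rfl⟩ := mem_SB1.1 ht
    exact ⟨Finset.mem_filter.2 ⟨g.bot_mem h2 h4 h3 (by omega) (by omega),
      g.cBot x h2 y h4 _ (by omega) h3 (by omega)⟩, g.B1_up h2 h4 h3, g.B1_right h2 h4 h3⟩
  have hB2 : ∀ t ∈ SB1 (fun X Y => F Y X) b a ℓ,
      t ∈ D ∧ M σ (te t) BWG.black ∧ M (tn t) ω BWG.white := by
    intro t ht
    obtain ⟨x, y, h2, h3, h4, rfl⟩ := mem_SB1.1 ht
    exact ⟨Finset.mem_filter.2 ⟨g.symm.bot_mem h2 h4 h3 (by omega) (by omega),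
      g.symm.cBot x h2 y h4 _ (by omega) h3 (by omega)⟩, (g.symm.B1_up h2 h4 h3).swap,
      (g.symm.B1_right h2 h4 h3).swap⟩
  have hC1 : ∀ t ∈ SC1 F a b ℓ, t ∈ D ∧ M (tn t) ω BWG.gray ∧ M (ts t) ω BWG.gray ∧
      M σ (tw t) BWG.white := by
    intro t ht
    obtain ⟨x, y, h2, h3, h4, rfl⟩ := mem_SC1.1 ht
    exact ⟨Finset.mem_filter.2 ⟨g.bot_mem h2 h4 h3 (by omega) (by omega),
      g.cBot x h2 y h4 _ (by omega) h3 (by omega)⟩, g.C1_up h2 h4 h3, g.C1_down h2 h4 h3,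
      g.C1_left h2 h4 h3⟩
  have hC2 : ∀ t ∈ SC1 (fun X Y => F Y X) b a ℓ, t ∈ D ∧ M σ (te t) BWG.gray ∧
      M σ (tw t) BWG.gray ∧ M (ts t) ω BWG.white := by
    intro t ht
    obtain ⟨x, y, h2, h3, h4, rfl⟩ := mem_SC1.1 ht
    exact ⟨Finset.mem_filter.2 ⟨g.symm.bot_mem h2 h4 h3 (by omega) (by omega),
      g.symm.cBot x h2 y h4 _ (by omega) h3 (by omega)⟩, (g.symm.C1_up h2 h4 h3).swap,
      (g.symm.C1_down h2 h4 h3).swap, (g.symm.C1_left h2 h4 h3).swap⟩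
  have hH : Wh ∈ D ∧ M (tn Wh) ω BWG.black ∧ M (ts Wh) ω BWG.black ∧ M σ (te Wh) BWG.gray :=
    ⟨Finset.mem_filter.2 ⟨g.hg_mem (by omega) (by omega),
      by rw [g.cRow1 _ (by omega) (by omega), if_pos rfl]⟩, g.W_up, g.W_down, g.W_right⟩
  have hV : Wv ∈ D ∧ M σ (te Wv) BWG.black ∧ M σ (tw Wv) BWG.black ∧ M (tn Wv) ω BWG.gray :=
    ⟨Finset.mem_filter.2 ⟨g.symm.hg_mem (by omega) (by omega),
      by rw [g.cCol1 _ (by omega) (by omega), if_pos rfl]⟩, g.symm.W_up.swap, g.symm.W_down.swap,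
      g.symm.W_right.swap⟩
  have d1 : Disjoint (SA F a b ℓ) (SB1 F a b ℓ) := Finset.disjoint_left.2 fun t h h' =>
    uq (hA t h).2.1 (hB1 t h').2.1 (by simp)
  have d2 : Disjoint (SA F a b ℓ ∪ SB1 F a b ℓ) (SC1 F a b ℓ) := by
    refine Finset.disjoint_left.2 fun t h h' => ?_
    rcases Finset.mem_union.1 h with h | h
    · exact uq (hA t h).2.1 (hC1 t h').2.1 (by simp)
    · exact uq (hB1 t h).2.1 (hC1 t h').2.1 (by simp)
  have d3 : Disjoint (SA F a b ℓ ∪ SB1 F a b ℓ ∪ SC1 F a b ℓ) (SB1 (fun X Y => F Y X) b a ℓ) := by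
    refine Finset.disjoint_left.2 fun t h h' => ?_
    simp only [Finset.mem_union] at h
    rcases h with (h | h) | h
    · exact uq (hA t h).2.2 (hB2 t h').2.1 (by simp)
    · exact uq (hB1 t h).2.2 (hB2 t h').2.1 (by simp)
    · exact uq (hC1 t h).2.1 (hB2 t h').2.2 (by simp)
  have d4 : Disjoint (SA F a b ℓ ∪ SB1 F a b ℓ ∪ SC1 F a b ℓ ∪ SB1 (fun X Y => F Y X) b a ℓ)
      (SC1 (fun X Y => F Y X) b a ℓ) := by
    refine Finset.disjoint_left.2 fun t h h' => ?_
    simp only [Finset.mem_union] at h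
    rcases h with ((h | h) | h) | h
    · exact uq (hA t h).2.2 (hC2 t h').2.1 (by simp)
    · exact uq (hB1 t h).2.2 (hC2 t h').2.1 (by simp)
    · exact uq (hC1 t h).2.2.1 (hC2 t h').2.2.2 (by simp)
    · exact uq (hB2 t h).2.1 (hC2 t h').2.1 (by simp)
  have d5 : Wh ∉ SA F a b ℓ ∪ SB1 F a b ℓ ∪ SC1 F a b ℓ ∪ SB1 (fun X Y => F Y X) b a ℓ ∪
      SC1 (fun X Y => F Y X) b a ℓ := by
    intro h
    simp only [Finset.mem_union] at h
    rcases h with (((h | h) | h) | h) | h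
    · exact uq (hA _ h).2.1 hH.2.1 (by simp)
    · exact uq (hB1 _ h).2.2 hH.2.2.2 (by simp)
    · exact uq (hC1 _ h).2.1 hH.2.1 (by simp)
    · exact uq (hB2 _ h).2.1 hH.2.2.2 (by simp)
    · exact uq (hC2 _ h).2.2.2 hH.2.2.1 (by simp)
  have d6 : Wv ∉ insert Wh (SA F a b ℓ ∪ SB1 F a b ℓ ∪ SC1 F a b ℓ ∪
      SB1 (fun X Y => F Y X) b a ℓ ∪ SC1 (fun X Y => F Y X) b a ℓ) := by
    intro h
    simp only [Finset.mem_insert, Finset.mem_union] at h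
    rcases h with h | (((h | h) | h) | h) | h
    · exact uq (h ▸ hH.2.1) hV.2.2.2 (by simp)
    · exact uq (hA _ h).2.1 hV.2.2.2 (by simp)
    · exact uq (hB1 _ h).2.1 hV.2.2.2 (by simp)
    · exact uq (hC1 _ h).2.2.2 hV.2.2.1 (by simp)
    · exact uq (hB2 _ h).2.2 hV.2.2.2 (by simp)
    · exact uq (hC2 _ h).2.1 hV.2.1 (by simp)
  have hsub : insert Wv (insert Wh (SA F a b ℓ ∪ SB1 F a b ℓ ∪ SC1 F a b ℓ ∪
      SB1 (fun X Y => F Y X) b a ℓ ∪ SC1 (fun X Y => F Y X) b a ℓ)) ⊆ D := by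
    intro t h
    simp only [Finset.mem_insert, Finset.mem_union] at h
    rcases h with rfl | rfl | (((h | h) | h) | h) | h
    · exact hV.1
    · exact hH.1
    · exact (hA t h).1
    · exact (hB1 t h).1
    · exact (hC1 t h).1
    · exact (hB2 t h).1
    · exact (hC2 t h).1
  have hc := Finset.card_le_card hsub
  rw [Finset.card_insert_of_notMem d6, Finset.card_insert_of_notMem d5,
    Finset.card_union_of_disjoint d4, Finset.card_union_of_disjoint d3,
    Finset.card_union_of_disjoint d2, Finset.card_union_of_disjoint d1] at hc
  omega

/-! ### Counting the corner tiles by portrayed color -/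

open Classical in
/-- The lower right tiles of supertiles above the bottom row which portray the color `o`. -/
noncomputable def SO (F : ℕ → ℕ → τ) (a b ℓ : ℕ) (P : ℕ → ℕ → ℕ) (o : ℕ) : Finset τ :=
  ((Finset.range a ×ˢ Finset.Ico 1 b).filter (fun q => P q.1 q.2 = o)).image
    (fun q => F (q.1 * ℓ + (ℓ - 1)) (q.2 * ℓ))

/-- At most `a` colors are confined to the bottom row, and every other color accounts for at
least one lower right tile. -/
theorem SC1_lower (g : Grid T col tn te ts tw F k a b ℓ P)
    (hsurj : ∀ c, 1 ≤ c → c ≤ k → ∃ x < a, ∃ y < b, P x y = c) (o : ℕ) :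
    k + (SO F a b ℓ P o).card ≤ (SC1 F a b ℓ).card + a + 1 := by
  classical
  have hsub : SO F a b ℓ P o ⊆ SC1 F a b ℓ := Finset.image_subset_image (Finset.filter_subset _ _)
  have hrow : (Finset.Icc 1 k \ ((Finset.range a).image (fun x => P x 0) ∪ {o})).card ≤
      (SC1 F a b ℓ \ SO F a b ℓ P o).card := by
    have h : ∀ c ∈ Finset.Icc 1 k \ ((Finset.range a).image (fun x => P x 0) ∪ {o}),
        ∃ x y, x < a ∧ 1 ≤ y ∧ y < b ∧ P x y = c := by
      intro c hc
      simp only [Finset.mem_sdiff, Finset.mem_Icc, Finset.mem_union, Finset.mem_image,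
        Finset.mem_range, Finset.mem_singleton, not_or, not_exists, not_and] at hc
      obtain ⟨x, hx, y, hy, rfl⟩ := hsurj c hc.1.1 hc.1.2
      refine ⟨x, y, hx, ?_, hy, rfl⟩
      rcases Nat.eq_zero_or_pos y with rfl | h
      · exact absurd rfl (hc.2.1 x hx)
      · exact h
    choose! px py h1 h2 h3 h4 using h
    refine Finset.card_le_card_of_injOn (fun c => F (px c * ℓ + (ℓ - 1)) (py c * ℓ)) ?_ ?_
    · intro c hc
      have hc : c ∈ Finset.Icc 1 k \ ((Finset.range a).image (fun x => P x 0) ∪ {o}) := hc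
      refine Finset.mem_coe.2 (Finset.mem_sdiff.2
        ⟨mem_SC1.2 ⟨_, _, h1 c hc, h2 c hc, h3 c hc, rfl⟩, ?_⟩)
      intro hm
      obtain ⟨q, hq, he⟩ := Finset.mem_image.1 hm
      simp only [Finset.mem_filter, Finset.mem_product, Finset.mem_range, Finset.mem_Ico] at hq
      have := g.symm.color_of_C2 hq.1.2.2 hq.1.1 (h3 c hc) (h1 c hc) hq.1.2.1 (h2 c hc) he
      rw [hq.2, h4 c hc] at this
      simp only [Finset.mem_sdiff, Finset.mem_union, Finset.mem_singleton, not_or] at hc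
      exact hc.2.2 this.symm
    · intro c hc d hd he
      have := g.symm.color_of_C2 (h3 c hc) (h1 c hc) (h3 d hd) (h1 d hd) (h2 c hc) (h2 d hd) he
      rwa [h4 c hc, h4 d hd] at this
  rw [Finset.card_sdiff_of_subset hsub] at hrow
  have h5 := Finset.le_card_sdiff ((Finset.range a).image (fun x => P x 0) ∪ {o}) (Finset.Icc 1 k)
  have h6 := Finset.card_union_le ((Finset.range a).image (fun x => P x 0)) {o}
  have h7 := Finset.card_image_le (s := Finset.range a) (f := fun x => P x 0)
  rw [Finset.card_range] at h7
  rw [Finset.card_singleton] at h6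
  rw [Nat.card_Icc] at h5
  have h8 := Finset.card_le_card hsub
  omega

/-- If eight distinct colors occur at the upper right of a `2 × 2` block whose two neighboring
positions have color `o`, then the corner tiles of supertiles portraying `o` must transmit eight
different pairs of signals. -/
theorem SO_mul (g : Grid T col tn te ts tw F k a b ℓ P) (ha : 17 ≤ a) (hb : 3 ≤ b) (o : ℕ)
    (hE : ∀ i < 8, P (2 * i + 1) 2 = o) (hS : ∀ i < 8, P (2 * i + 2) 1 = o)
    (hY : ∀ i < 8, ∀ j < 8, P (2 * i + 2) 2 = P (2 * j + 2) 2 → i = j) :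
    8 ≤ (SO F a b ℓ P o).card *
      (SO (fun X Y => F Y X) b a ℓ (fun x y => P y x) o).card := by
  classical
  have hl := g.hl
  rw [← Finset.card_product, ← Finset.card_range 8]
  refine Finset.card_le_card_of_injOn
    (fun i => (F ((2 * i + 1) * ℓ + (ℓ - 1)) (2 * ℓ), F ((2 * i + 2) * ℓ) (1 * ℓ + (ℓ - 1)))) ?_ ?_
  · intro i hi
    have hi : i < 8 := by simpa using hi
    refine Finset.mem_coe.2 (Finset.mem_product.2 ⟨Finset.mem_image.2 ⟨(2 * i + 1, 2), ?_, rfl⟩,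
      Finset.mem_image.2 ⟨(1, 2 * i + 2), ?_, rfl⟩⟩)
    · simp only [Finset.mem_filter, Finset.mem_product, Finset.mem_range, Finset.mem_Ico]
      exact ⟨by omega, hE i hi⟩
    · simp only [Finset.mem_filter, Finset.mem_product, Finset.mem_range, Finset.mem_Ico]
      exact ⟨by omega, hS i hi⟩
  · intro i hi j hj he
    have hi : i < 8 := by simpa using hi
    have hj : j < 8 := by simpa using hj
    simp only [Prod.mk.injEq] at he
    have bi := bound (ℓ := ℓ) (show 2 * i + 2 < a by omega)
    have bj := bound (ℓ := ℓ) (show 2 * j + 2 < a by omega)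
    have bb := bound (ℓ := ℓ) (show 2 < b by omega)
    have mi : (2 * i + 2) * ℓ = (2 * i + 1) * ℓ + ℓ := mulsucc (2 * i + 1) ℓ
    have mj : (2 * j + 2) * ℓ = (2 * j + 1) * ℓ + ℓ := mulsucc (2 * j + 1) ℓ
    have hA : F ((2 * i + 2) * ℓ) (2 * ℓ) = F ((2 * j + 2) * ℓ) (2 * ℓ) := by
      refine g.dir _ (g.mem _ _ (by omega) (by omega) (by omega) (by omega)) _
        (g.mem _ _ (by omega) (by omega) (by omega) (by omega)) ?_ ?_
      · rw [g.ver _ (1 * ℓ + (ℓ - 1)) _ (by omega) (by omega) (by omega) (by omega) (by omega),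
          g.ver _ (1 * ℓ + (ℓ - 1)) _ (by omega) (by omega) (by omega) (by omega) (by omega), he.2]
      · rw [g.hor ((2 * i + 1) * ℓ + (ℓ - 1)) _ _ (by omega) (by omega) (by omega) (by omega)
            (by omega),
          g.hor ((2 * j + 1) * ℓ + (ℓ - 1)) _ _ (by omega) (by omega) (by omega) (by omega)
            (by omega), he.1]
    have hs := g.supertile_eq (x := 2 * i + 2) (y := 2) (x' := 2 * j + 2) (y' := 2) (by omega)
      (by omega) (by omega) (by omega) (by omega) (by omega) (by omega) (by omega) hA
      (ℓ - 1) (by omega) 0 (by omega)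
    exact hY i hi j hj (g.color_of_C2 (by omega) (by omega) (by omega) (by omega) (by omega)
      (by omega) hs)

/-- The white budget leaves room for at most `k + 4 - (a + b)` lower left tiles of complete
supertiles. -/
theorem SA_card (g : Grid T col tn te ts tw F k a b ℓ P) (ha : 17 ≤ a) (hb : 3 ≤ b) (o : ℕ)
    (hE : ∀ i < 8, P (2 * i + 1) 2 = o) (hS : ∀ i < 8, P (2 * i + 2) 1 = o)
    (hY : ∀ i < 8, ∀ j < 8, P (2 * i + 2) 2 = P (2 * j + 2) 2 → i = j)
    (hsurj : ∀ c, 1 ≤ c → c ≤ k → ∃ x < a, ∃ y < b, P x y = c)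
    (hw : (T.filter (fun t => col t = BWG.white)).card ≤ 5 * k + 14 - 3 * (a + b)) :
    (SA F a b ℓ).card + (a + b) ≤ k + 4 := by
  have h1 := g.white_count
  have h2 := g.card_SC1_le
  have h3 := g.symm.card_SC1_le
  have h4 := g.SC1_lower hsurj o
  have h5 := g.symm.SC1_lower (fun c hc hc' => by
    obtain ⟨x, hx, y, hy, h⟩ := hsurj c hc hc'
    exact ⟨y, hy, x, hx, h⟩) o
  have h6 := g.SO_mul ha hb o hE hS hY
  -- two numbers with product at least 8 have sum at least 6
  have h7 : 6 ≤ (SO F a b ℓ P o).card +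
      (SO (fun X Y => F Y X) b a ℓ (fun x y => P y x) o).card := by
    generalize (SO F a b ℓ P o).card = p at h6
    generalize (SO (fun X Y => F Y X) b a ℓ (fun x y => P y x) o).card = q at h6
    by_contra hlt
    have hp : p ≤ 5 := by omega
    interval_cases p <;> omega
  omega

end Grid

/-! ### The pattern `Q` as a grid -/

theorem place_first (F : CNF3) {x y : ℕ} (h1 : 1 ≤ x) (h2 : x < 17) (h3 : 1 ≤ y) (h4 : y < 3) :
    patF F x y = pPat (x - 1) (y - 1) := by
  unfold patF blocksOf
  simp only [List.cons_append, place]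
  exact if_pos ⟨h1, by omega, h3, by omega⟩

theorem patF_E (F : CNF3) {i : ℕ} (hi : i < 8) : patF F (2 * i + 1) 2 = PColor.orC := by
  rw [place_first F (by omega) (by omega) (by omega) (by omega)]
  simp [pPat]

theorem patF_S (F : CNF3) {i : ℕ} (hi : i < 8) : patF F (2 * i + 2) 1 = PColor.orC := by
  rw [place_first F (by omega) (by omega) (by omega) (by omega)]
  have h : ¬ (2 * i + 2 - 1) % 2 = 0 := by omega
  simp only [pPat, if_neg h]
  simp

theorem patF_Y (F : CNF3) {i : ℕ} (hi : i < 8) : patF F (2 * i + 2) 2 = PColor.Y ⟨i, hi⟩ := by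
  rw [place_first F (by omega) (by omega) (by omega) (by omega)]
  simp only [pPat]
  rw [if_neg (by omega), if_neg (by omega)]
  refine congrArg PColor.Y (Fin.ext ?_)
  simp only
  omega

theorem grid_of_assignment {G : Type}
    (k w h ℓ : ℕ) (P : ℕ → ℕ → ℕ) (hℓ : ℓ = 5 * k + 8) (hw : 3 ≤ w) (hh : 1 ≤ h)
    (hP : ∀ x < w, ∀ y < h, 1 ≤ P x y ∧ P x y ≤ k)
    (Θ : RTAS BWG G) (hD : DirectedTAS Θ)
    (hb : (Θ.tiles.filter (fun t => t.color = BWG.black)).card ≤ 1)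
    (hwt : (Θ.tiles.filter (fun t => t.color = BWG.white)).card ≤ 5 * k + 14 - 3 * (w + h))
    (hg : (Θ.tiles.filter (fun t => t.color = BWG.gray)).card ≤ 2 * k + 3)
    (f : ℕ → ℕ → Tile BWG G)
    (hf : IsAssignment Θ (QW k w) (QH k h) f)
    (hcol : ∀ X < QW k w, ∀ Y < QH k h, (f X Y).color = QPat k w h P X Y) :
    Grid Θ.tiles Tile.color Tile.north Tile.east Tile.south Tile.west
      (fun X Y => f (X - 1) (Y - 1)) k w h ℓ P := by
  have hQW : QW k w = w * ℓ + 2 := by rw [QW, hℓ, Nat.mul_comm]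
  have hQH : QH k h = h * ℓ + 2 := by rw [QH, hℓ, Nat.mul_comm]
  rw [hQW, hQH] at hf hcol
  obtain ⟨hm, -, -, hhor, hver⟩ := hf
  have hlw : ℓ ≤ w * ℓ := by
    have := Grid.bound (ℓ := ℓ) (show 0 < w by omega)
    omega
  have hlh : ℓ ≤ h * ℓ := by
    have := Grid.bound (ℓ := ℓ) (show 0 < h by omega)
    omega
  have hcol' : ∀ X Y, 1 ≤ X → X ≤ w * ℓ + 2 → 1 ≤ Y → Y ≤ h * ℓ + 2 →
      (f (X - 1) (Y - 1)).color =
      if X < w * ℓ ∧ Y < h * ℓ then superPat ℓ (P (X / ℓ) (Y / ℓ)) (X % ℓ) (Y % ℓ)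
      else if X < w * ℓ then
        if Y = h * ℓ + 1 then (if X = k + 1 then BWG.white else BWG.gray)
        else (if X % ℓ = ℓ - 1 then BWG.gray else BWG.black)
      else if Y < h * ℓ then
        if X = w * ℓ + 1 then (if Y = k + 1 then BWG.white else BWG.gray)
        else (if Y % ℓ = ℓ - 1 then BWG.gray else BWG.black)
      else if X = w * ℓ + 1 ∨ Y = h * ℓ + 1 then BWG.gray else BWG.black := by
    intro X Y h1 h2 h3 h4
    rw [hcol _ (by omega) _ (by omega), QPat]
    simp only [← hℓ, Nat.mul_comm ℓ, Nat.sub_add_cancel h1, Nat.sub_add_cancel h3]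
    have e1 : ∀ n, (X - 1 = n) = (X = n + 1) := fun n => propext (by omega)
    have e2 : ∀ n, (Y - 1 = n) = (Y = n + 1) := fun n => propext (by omega)
    simp only [e1, e2]
  have hcell : ∀ x < w, ∀ y < h, ∀ i < ℓ, ∀ j < ℓ, 1 ≤ x * ℓ + i → 1 ≤ y * ℓ + j →
      (f (x * ℓ + i - 1) (y * ℓ + j - 1)).color = superPat ℓ (P x y) i j := by
    intro x hx y hy i hi j hj h1 h2
    have b1 := Grid.bound (ℓ := ℓ) hx
    have b2 := Grid.bound (ℓ := ℓ) hy
    rw [hcol' _ _ h1 (by omega) h2 (by omega), if_pos ⟨by omega, by omega⟩]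
    have hd : ∀ z n, n < ℓ → (z * ℓ + n) / ℓ = z ∧ (z * ℓ + n) % ℓ = n := by
      intro z n hn
      rw [Nat.add_comm, Nat.add_mul_div_right _ _ (by omega), Nat.add_mul_mod_self_right,
        Nat.div_eq_of_lt hn, Nat.mod_eq_of_lt hn]
      simp
    rw [(hd x i hi).1, (hd x i hi).2, (hd y j hj).1, (hd y j hj).2]
  refine
    { hl := hℓ, ha := by omega, hb := hh, dir := ?_, nblack := hb, ngray := hg,
      nwhite := by omega, hP := hP, mem := ?_, hor := ?_, ver := ?_, cIn := ?_, cTop := ?_,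
      cRight := ?_, cBot := ?_, cLeft := ?_, cRow0 := ?_, cRow1 := ?_, cRow2 := ?_,
      cCol0 := ?_, cCol1 := ?_, cCol2 := ?_ }
  · intro t ht u hu h1 h2
    by_contra hne
    rcases hD t ht u hu hne with h | h
    · exact h h1
    · exact h h2
  · intro X Y h1 h2 h3 h4
    exact hm _ (by omega) _ (by omega)
  · intro X X' Y hX h1 h2 h3 h4
    subst hX
    have := hhor (X - 1) (by omega) (Y - 1) (by omega)
    rwa [Nat.sub_add_cancel h1] at this
  · intro X Y Y' hY h1 h2 h3 h4
    subst hY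
    have := hver (X - 1) (by omega) (Y - 1) (by omega)
    rwa [Nat.sub_add_cancel h3] at this
  · intro x hx y hy i j h1 h2 h3 h4
    rw [hcell x hx y hy i (by omega) j (by omega) (by omega) (by omega), superPat,
      if_neg (by omega), if_neg (by omega), if_neg (by omega), if_neg (by omega)]
  · intro x hx y hy i h1 h2
    rw [hcell x hx y hy i (by omega) _ (by omega) (by omega) (by omega), superPat,
      if_neg (by omega), if_neg (by omega), if_pos rfl]
  · intro x hx y hy j h1 h2
    have := hP x hx y hy
    rw [hcell x hx y hy _ (by omega) j (by omega) (by omega) (by omega), superPat,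
      if_neg (by omega), if_neg (by omega)]
    by_cases hj : j = ℓ - 1
    · rw [if_pos hj, if_neg (by omega), if_neg (by omega)]
    · rw [if_neg hj, if_pos rfl]
  · intro x hx y hy i hi h1 h2
    have := Nat.mul_le_mul_right ℓ h1
    have h := hcell x hx y hy i hi 0 (by omega) h2 (by omega)
    rw [superPat, if_pos rfl] at h
    exact h
  · intro x hx y hy j hj h1 h2
    have := Nat.mul_le_mul_right ℓ h1
    have h := hcell x hx y hy 0 (by omega) j hj (by omega) h2
    rw [superPat] at h
    simp only [if_true, ite_self] at h
    exact h
  · intro X h1 h2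
    rw [hcol' X (h * ℓ) h1 (by omega) (by omega) (by omega), if_neg (by omega), if_pos (by omega),
      if_neg (by omega), Nat.mod_eq_of_lt h2]
  · intro X h1 h2
    rw [hcol' X (h * ℓ + 1) h1 (by omega) (by omega) (by omega), if_neg (by omega),
      if_pos (by omega), if_pos rfl]
  · intro X h1 h2
    rw [hcol' X (h * ℓ + 2) h1 (by omega) (by omega) (by omega), if_neg (by omega),
      if_pos (by omega), if_neg (by omega), Nat.mod_eq_of_lt (by omega), if_neg (by omega)]
  · intro Y h1 h2
    rw [hcol' (w * ℓ) Y (by omega) (by omega) h1 (by omega), if_neg (by omega), if_neg (by omega),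
      if_pos (by omega), if_neg (by omega), Nat.mod_eq_of_lt h2]
  · intro Y h1 h2
    rw [hcol' (w * ℓ + 1) Y (by omega) (by omega) h1 (by omega), if_neg (by omega),
      if_neg (by omega), if_pos (by omega), if_pos rfl]
  · intro Y h1 h2
    rw [hcol' (w * ℓ + 2) Y (by omega) (by omega) h1 (by omega), if_neg (by omega),
      if_neg (by omega), if_pos (by omega), if_neg (by omega), Nat.mod_eq_of_lt (by omega),
      if_neg (by omega)]

/-- If a DTAS `Θ` self-assembles `Q` using at most `m_b = 1` black,
`m_w = 5k − 3(w + h) + 14` white and `m_g = 2k + 3` gray tile types, then the set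
of distinct supertiles occurring in the tile assignment `Q_Θ` has cardinality at
most `m = k + 3`. -/
theorem supertile_count_bound {G : Type} [DecidableEq G]
    (k w h ℓ : ℕ) (P : ℕ → ℕ → ℕ) (hI : InI k w h P) (hℓ : ℓ = 5 * k + 8)
    (Θ : RTAS BWG G) (hD : DirectedTAS Θ)
    (hb : countColor Θ BWG.black ≤ 1)
    (hwt : countColor Θ BWG.white ≤ 5 * k + 14 - 3 * (w + h))
    (hg : countColor Θ BWG.gray ≤ 2 * k + 3)
    (f : ℕ → ℕ → Tile BWG G)
    (hf : IsAssignment Θ (QW k w) (QH k h) f)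
    (hcol : ∀ X < QW k w, ∀ Y < QH k h, (f X Y).color = QPat k w h P X Y) :
    {g : ℕ → ℕ → Option (Tile BWG G) |
      ∃ x < w, ∃ y < h, g = superOpt ℓ f x y}.ncard ≤ k + 3 := by
  classical
  obtain ⟨F, ρ, hw, hh, hρ, hPρ⟩ := hI
  have hw45 : 45 ≤ w := by rw [hw, widthF]; omega
  have hmemC : ∀ x < w, ∀ y < h, patF F x y ∈ colorsOf (widthF F) 6 (patF F) := by
    intro x hx y hy
    exact Finset.mem_image.2 ⟨(x, y), Finset.mem_product.2
      ⟨Finset.mem_range.2 (hw ▸ hx), Finset.mem_range.2 (hh ▸ hy)⟩, rfl⟩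
  have hP : ∀ x < w, ∀ y < h, 1 ≤ P x y ∧ P x y ≤ k := by
    intro x hx y hy
    rw [hPρ x hx y hy]
    exact hρ.mapsTo (Finset.mem_coe.2 (hmemC x hx y hy))
  have hsurj : ∀ c, 1 ≤ c → c ≤ k → ∃ x < w, ∃ y < h, P x y = c := by
    intro c h1 h2
    obtain ⟨p, hp, rfl⟩ := hρ.surjOn (show c ∈ Set.Icc 1 k from ⟨h1, h2⟩)
    obtain ⟨⟨x, y⟩, hq, rfl⟩ := Finset.mem_image.1 (Finset.mem_coe.1 hp)
    rw [Finset.mem_product, Finset.mem_range, Finset.mem_range, ← hw, ← hh] at hq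
    exact ⟨x, hq.1, y, hq.2, hPρ x hq.1 y hq.2⟩
  have hwt' : (Θ.tiles.filter (fun t => t.color = BWG.white)).card ≤ 5 * k + 14 - 3 * (w + h) := by
    simpa only [countColor] using hwt
  have g := grid_of_assignment k w h ℓ P hℓ (by omega) (by omega) hP Θ hD
    (by simpa only [countColor] using hb) hwt' (by simpa only [countColor] using hg) f hf hcol
  have hA := g.SA_card (by omega) (by omega) (ρ PColor.orC)
    (fun i hi => by rw [hPρ _ (by omega) _ (by omega), patF_E F hi])
    (fun i hi => by rw [hPρ _ (by omega) _ (by omega), patF_S F hi])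
    (fun i hi j hj he => by
      rw [hPρ _ (by omega) _ (by omega), hPρ _ (by omega) _ (by omega)] at he
      have := hρ.injOn (Finset.mem_coe.2 (hmemC _ (by omega) _ (by omega)))
        (Finset.mem_coe.2 (hmemC _ (by omega) _ (by omega))) he
      rw [patF_Y F hi, patF_Y F hj] at this
      simpa using this)
    hsurj hwt'
  -- complete supertiles, followed by the incomplete ones in the bottom row and left column
  let SQ : Finset (ℕ → ℕ → Option (Tile BWG G)) :=
    (Finset.Ico 1 w ×ˢ Finset.Ico 1 h).image (fun q => superOpt ℓ f q.1 q.2)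
  let I1 : Finset (ℕ → ℕ → Option (Tile BWG G)) :=
    (Finset.range w).image (fun x => superOpt ℓ f x 0)
  let I2 : Finset (ℕ → ℕ → Option (Tile BWG G)) :=
    (Finset.Ico 1 h).image (fun y => superOpt ℓ f 0 y)
  have hSQ : SQ.card ≤ (Grid.SA (fun X Y => f (X - 1) (Y - 1)) w h ℓ).card := by
    have hex : ∀ s ∈ SQ, ∃ x y, 1 ≤ x ∧ x < w ∧ 1 ≤ y ∧ y < h ∧ s = superOpt ℓ f x y := by
      intro s hs
      obtain ⟨q, hq, rfl⟩ := Finset.mem_image.1 hs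
      simp only [Finset.mem_product, Finset.mem_Ico] at hq
      exact ⟨q.1, q.2, hq.1.1, hq.1.2, hq.2.1, hq.2.2, rfl⟩
    choose! px py h1 h2 h3 h4 h5 using hex
    refine Finset.card_le_card_of_injOn (fun s => f (px s * ℓ - 1) (py s * ℓ - 1)) ?_ ?_
    · intro s hs
      exact Finset.mem_coe.2 (Grid.mem_SA.2
        ⟨px s, py s, h1 s hs, h2 s hs, h3 s hs, h4 s hs, rfl⟩)
    · intro s hs t ht he
      have key := g.supertile_eq (h2 s hs) (h4 s hs) (h2 t ht) (h4 t ht) (h1 s hs) (h1 t ht)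
        (h3 s hs) (h3 t ht) he
      rw [h5 s hs, h5 t ht]
      funext i j
      have := h1 s hs
      have := h1 t ht
      have := h3 s hs
      have := h3 t ht
      unfold superOpt
      by_cases hij : i < ℓ ∧ j < ℓ
      · rw [if_pos ⟨hij.1, hij.2, by omega, by omega⟩, if_pos ⟨hij.1, hij.2, by omega, by omega⟩]
        exact congrArg some (key j hij.2 i hij.1)
      · rw [if_neg (fun h => hij ⟨h.1, h.2.1⟩), if_neg (fun h => hij ⟨h.1, h.2.1⟩)]
  have hI1 : I1.card ≤ w := by
    simpa using Finset.card_image_le (s := Finset.range w) (f := fun x => superOpt ℓ f x 0)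
  have hI2 : I2.card ≤ h - 1 := by
    simpa using Finset.card_image_le (s := Finset.Ico 1 h) (f := fun y => superOpt ℓ f 0 y)
  have hsub : {g : ℕ → ℕ → Option (Tile BWG G) |
      ∃ x < w, ∃ y < h, g = superOpt ℓ f x y} ⊆ ↑(SQ ∪ (I1 ∪ I2)) := by
    rintro s ⟨x, hx, y, hy, rfl⟩
    simp only [Finset.coe_union, Set.mem_union, Finset.mem_coe]
    rcases Nat.eq_zero_or_pos y with rfl | hy0
    · exact Or.inr (Or.inl (Finset.mem_image.2 ⟨x, Finset.mem_range.2 hx, rfl⟩))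
    · rcases Nat.eq_zero_or_pos x with rfl | hx0
      · exact Or.inr (Or.inr (Finset.mem_image.2 ⟨y, Finset.mem_Ico.2 ⟨hy0, hy⟩, rfl⟩))
      · exact Or.inl (Finset.mem_image.2 ⟨(x, y), Finset.mem_product.2
          ⟨Finset.mem_Ico.2 ⟨hx0, hx⟩, Finset.mem_Ico.2 ⟨hy0, hy⟩⟩, rfl⟩)
  have hc := Set.ncard_le_ncard hsub (Finset.finite_toSet _)
  rw [Set.ncard_coe_finset] at hc
  have hu1 := Finset.card_union_le SQ (I1 ∪ I2)
  have hu2 := Finset.card_union_le I1 I2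
  omega
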